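/- arXiv:1209.5840 — 3 statements merged into one kernel-verified Lean document; each statement's English description precedes it below -/
import Mathlib

section
/- Let n ≥ 2, let p, r ∈ [1,∞) and s ∈ (0,1) satisfy 0 ≤ 1/r − 1/p < s/n. Then there is a constant c > 0 (depending on n, p, r, s but not on Q or u) such that for every cube Q ⊆ ℝⁿ and every u ∈ L^r(Q), ∫_Q |u(x) − u_Q|^p dx ≤ c |Q|^{1 + ps/n − p/r} (∫_Q ∫_Q |u(x)−u(y)|^r / |x−y|^{n+sr} dy dx)^{p/r}, as an inequality in [0,∞], where u_Q := ⨍_Q u and |·| is the Euclidean norm. -/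
open MeasureTheory Metric Set Filter
open scoped ENNReal NNReal Topology

noncomputable section

/-- ℝⁿ, with the sup-norm (given by the product metric on `Fin n → ℝ`). -/
abbrev Rn (n : ℕ) := Fin n → ℝ

/-- The Euclidean distance on `Rn n`. -/
def euclDist {n : ℕ} (x y : Rn n) : ℝ := Real.sqrt (∑ i, (x i - y i) ^ 2)

lemma jensen_avg {α : Type*} [MeasurableSpace α] (μ : Measure α) (B : Set α) (h0 : μ B ≠ 0)
    (ht : μ B ≠ ⊤) (u : α → ℝ) (hu : Measurable u) (hi : IntegrableOn u B μ) (c r : ℝ) (hr : 1 ≤ r) :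
    ENNReal.ofReal |c - ⨍ y in B, u y ∂μ| ^ r ≤
      (μ B)⁻¹ * ∫⁻ y in B, ENNReal.ofReal |c - u y| ^ r ∂μ := by
  rw [setAverage_eq']
  set ν := (μ B)⁻¹ • μ.restrict B with hν
  have : IsProbabilityMeasure ν := ⟨by simp [hν, ENNReal.inv_mul_cancel h0 ht]⟩
  have hi' : Integrable u ν := hi.smul_measure (by simp [h0])
  have e1 : c - ∫ y, u y ∂ν = ∫ y, (c - u y) ∂ν := by
    rw [integral_sub (integrable_const c) hi']; simp
  have e2 : (μ B)⁻¹ * ∫⁻ y in B, ENNReal.ofReal |c - u y| ^ r ∂μ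
      = ∫⁻ y, ENNReal.ofReal |c - u y| ^ r ∂ν := by
    rw [hν, lintegral_smul_measure]; rfl
  rw [e2, e1]
  have h := eLpNorm'_le_eLpNorm'_of_exponent_le (μ := ν) (f := fun y => c - u y) zero_lt_one hr
    (by fun_prop)
  have h' := (enorm_integral_le_lintegral_enorm (μ := ν) (fun y => c - u y)).trans
    (by simpa [eLpNorm'] using h)
  have hr0 : 0 < r := by linarith
  simp only [← Real.enorm_eq_ofReal_abs]
  calc _ ≤ _ := ENNReal.rpow_le_rpow h' hr0.le
    _ = _ := by rw [← ENNReal.rpow_mul, inv_mul_cancel₀ hr0.ne', ENNReal.rpow_one]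

lemma tsum_weight (p : ℝ) (hp : 1 ≤ p) (w f : ℕ → ℝ≥0∞) :
    (∑' i, w i * f i) ^ p ≤ (∑' i, w i) ^ (p - 1) * ∑' i, w i * f i ^ p := by
  have hp0 : 0 < p := by linarith
  have key : ∑' i, w i * f i ≤ (∑' i, w i) ^ (1 - p⁻¹) * (∑' i, w i * f i ^ p) ^ p⁻¹ := by
    rw [ENNReal.tsum_eq_iSup_sum]
    refine iSup_le fun s => (ENNReal.inner_le_weight_mul_Lp_of_nonneg s hp w f).trans ?_
    have : 0 ≤ 1 - p⁻¹ := sub_nonneg.2 (inv_le_one_of_one_le₀ hp)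
    gcongr <;> exact ENNReal.sum_le_tsum s
  calc _ ≤ _ := ENNReal.rpow_le_rpow key hp0.le
    _ = _ := by
      rw [ENNReal.mul_rpow_of_nonneg _ _ hp0.le, ← ENNReal.rpow_mul, ← ENNReal.rpow_mul,
        inv_mul_cancel₀ hp0.ne', ENNReal.rpow_one]
      congr 2; field_simp

lemma vol_lower {n : ℕ} (q x : Rn n) (R t : ℝ) (hR : 0 < R) (ht : 0 < t) (htR : t ≤ 2 * R)
    (hx : x ∈ closedBall q R) :
    ENNReal.ofReal t ^ n ≤ volume (closedBall q R ∩ closedBall x t) := by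
  have hd : ‖q - x‖ ≤ R := by rw [← dist_eq_norm, dist_comm]; exact hx
  set l := t / (2 * R) with hl
  have hl0 : 0 ≤ l := by positivity
  have hl1 : l ≤ 1 := (div_le_one (by positivity)).2 htR
  have hlR : l * R = t / 2 := by rw [hl]; field_simp
  set c := x + l • (q - x) with hc
  have hcx : dist c x ≤ t / 2 := by
    rw [dist_eq_norm, hc, add_sub_cancel_left, norm_smul, Real.norm_of_nonneg hl0, ← hlR]
    gcongr
  have hcq : dist c q ≤ R - t / 2 := by
    have : c - q = (-(1 - l)) • (q - x) := by rw [hc]; module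
    rw [dist_eq_norm, this, norm_smul, norm_neg, Real.norm_of_nonneg (by linarith), ← hlR]
    nlinarith
  have hsub : closedBall c (t / 2) ⊆ closedBall q R ∩ closedBall x t := by
    refine subset_inter (closedBall_subset_closedBall' (by linarith))
      (closedBall_subset_closedBall' (by linarith))
  refine le_trans (le_of_eq ?_) (measure_mono hsub)
  rw [Real.volume_pi_closedBall _ (by positivity), ← ENNReal.ofReal_pow ht.le]
  simp [mul_div_cancel₀]

lemma eucl_le {n : ℕ} (y z : Rn n) (D : ℝ) (h : dist y z ≤ D) : euclDist y z ≤ n * D := by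
  have hD : 0 ≤ D := dist_nonneg.trans h
  rw [euclDist, Real.sqrt_le_left (by positivity)]
  have : ∀ i, |y i - z i| ≤ D := fun i => by
    have := dist_le_pi_dist y z i
    rw [Real.dist_eq] at this; linarith
  calc ∑ i, (y i - z i) ^ 2 ≤ ∑ i : Fin n, D ^ 2 :=
        Finset.sum_le_sum fun i _ => by
          rw [← sq_abs]; exact pow_le_pow_left₀ (abs_nonneg _) (this i) 2
    _ = n * D ^ 2 := by simp
    _ ≤ (n * D) ^ 2 := by
      rw [mul_pow]
      gcongr
      rcases Nat.eq_zero_or_pos n with h | h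
      · simp [h]
      · exact_mod_cast Nat.le_self_pow two_ne_zero n

lemma eucl_eq_zero {n : ℕ} (y z : Rn n) (h : euclDist y z ≤ 0) : y = z := by
  have h0 : (∑ i, (y i - z i) ^ 2) ≤ 0 := by
    exact Real.sqrt_eq_zero'.1 (le_antisymm h (Real.sqrt_nonneg _))
  have h1 := (Finset.sum_eq_zero_iff_of_nonneg (fun i _ => sq_nonneg _)).1
    (le_antisymm h0 (Finset.sum_nonneg fun i _ => sq_nonneg (y i - z i)))
  ext i
  have := h1 i (Finset.mem_univ i)
  have := pow_eq_zero_iff two_ne_zero |>.1 this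
  linarith

def kerK {n : ℕ} (u : Rn n → ℝ) (r e : ℝ) (y z : Rn n) : ℝ≥0∞ :=
  ENNReal.ofReal |u y - u z| ^ r * ENNReal.ofReal (euclDist y z) ^ (-e)

lemma kerK_meas {n : ℕ} (u : Rn n → ℝ) (hu : Measurable u) (r e : ℝ) :
    Measurable (fun q : Rn n × Rn n => kerK u r e q.1 q.2) := by
  unfold kerK euclDist
  fun_prop

lemma kerK_bound {n : ℕ} (u : Rn n → ℝ) (r e : ℝ) (hr : 1 ≤ r) (he : 0 ≤ e) (y z : Rn n) (D : ℝ)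
    (h : dist y z ≤ D) :
    ENNReal.ofReal |u y - u z| ^ r ≤ ENNReal.ofReal (n * D) ^ e * kerK u r e y z := by
  rcases le_or_gt (euclDist y z) 0 with h0 | h0
  · rw [eucl_eq_zero y z h0]; simp [show 0 < r by linarith]
  · have h1 := eucl_le y z D h
    unfold kerK
    rw [mul_left_comm]
    refine le_mul_of_one_le_right' ?_
    rw [ENNReal.rpow_neg, ← div_eq_mul_inv, ENNReal.le_div_iff_mul_le (Or.inl ?_) (Or.inl ?_), one_mul]
    · gcongr
    · exact (ENNReal.rpow_pos (by simpa using h0) (by simp)).ne'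
    · exact ENNReal.rpow_ne_top_of_nonneg he (by simp)

def GG {n : ℕ} (u : Rn n → ℝ) (r e : ℝ) (Q : Set (Rn n)) (y : Rn n) : ℝ≥0∞ :=
  ∫⁻ z in Q, kerK u r e y z

lemma GG_meas {n : ℕ} (u : Rn n → ℝ) (hu : Measurable u) (r e : ℝ) (Q : Set (Rn n)) :
    Measurable (GG u r e Q) :=
  (kerK_meas u hu r e).lintegral_prod_right'

def FF {n : ℕ} (u : Rn n → ℝ) (r e : ℝ) (Q : Set (Rn n)) (t : ℝ) (x : Rn n) : ℝ≥0∞ :=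
  ∫⁻ y in Q ∩ closedBall x t, GG u r e Q y

lemma FF_eq {n : ℕ} (u : Rn n → ℝ) (r e : ℝ) (Q : Set (Rn n)) (t : ℝ) (x : Rn n) :
    FF u r e Q t x = ∫⁻ y in Q, {q : Rn n × Rn n | dist q.2 q.1 ≤ t}.indicator
      (fun q => GG u r e Q q.2) (x, y) := by
  unfold FF
  rw [inter_comm, ← Measure.restrict_restrict measurableSet_closedBall,
    ← lintegral_indicator measurableSet_closedBall]
  rfl

lemma FF_ind_meas {n : ℕ} (u : Rn n → ℝ) (hu : Measurable u) (r e : ℝ) (Q : Set (Rn n)) (t : ℝ) :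
    Measurable ({q : Rn n × Rn n | dist q.2 q.1 ≤ t}.indicator (fun q => GG u r e Q q.2)) := by
  have h := GG_meas u hu r e Q
  refine Measurable.indicator (by fun_prop) ?_
  exact measurableSet_le (by fun_prop) (by fun_prop)

lemma FF_meas {n : ℕ} (u : Rn n → ℝ) (hu : Measurable u) (r e : ℝ) (Q : Set (Rn n)) (t : ℝ) :
    Measurable (FF u r e Q t) := by
  have : FF u r e Q t = _ := funext (FF_eq u r e Q t)
  rw [this]
  exact (FF_ind_meas u hu r e Q t).lintegral_prod_right'

lemma FF_int {n : ℕ} (u : Rn n → ℝ) (hu : Measurable u) (r e : ℝ) (Q : Set (Rn n)) (t : ℝ)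
    (ht : 0 < t) :
    ∫⁻ x in Q, FF u r e Q t x ≤ (2 ^ n * ENNReal.ofReal t ^ n) * ∫⁻ y in Q, GG u r e Q y := by
  simp only [FF_eq]
  rw [lintegral_lintegral_swap (f := fun x y => {q : Rn n × Rn n | dist q.2 q.1 ≤ t}.indicator
      (fun q => GG u r e Q q.2) (x, y)) (FF_ind_meas u hu r e Q t).aemeasurable,
    ← lintegral_const_mul _ (GG_meas u hu r e Q)]
  refine lintegral_mono fun y => ?_
  have : ∀ x, {q : Rn n × Rn n | dist q.2 q.1 ≤ t}.indicator (fun q => GG u r e Q q.2) (x, y)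
      = (closedBall y t).indicator (fun _ => GG u r e Q y) x := by
    intro x
    simp only [indicator, mem_ofPred_eq, mem_closedBall, dist_comm]
  simp only [this]
  rw [lintegral_indicator measurableSet_closedBall, setLIntegral_const, mul_comm]
  gcongr
  refine (Measure.restrict_apply_le _ _).trans ?_
  rw [Real.volume_pi_closedBall _ ht.le, ENNReal.ofReal_pow (by positivity),
    ENNReal.ofReal_mul (by norm_num), mul_pow]
  simp

lemma avg_bound {n : ℕ} (u : Rn n → ℝ) (hu : Measurable u) (r e : ℝ) (hr : 1 ≤ r) (he : 0 ≤ e)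
    (q x : Rn n) (R t : ℝ) (hR : 0 < R) (ht : 0 < t) (htR : t ≤ 2 * R)
    (hx : x ∈ closedBall q R) (hi : IntegrableOn u (closedBall q R))
    (y : Rn n) (hy : y ∈ closedBall x t) :
    ENNReal.ofReal |u y - ⨍ z in closedBall q R ∩ closedBall x t, u z| ^ r ≤
      (ENNReal.ofReal t ^ n)⁻¹ * (ENNReal.ofReal (n * (2 * t)) ^ e * GG u r e (closedBall q R) y) := by
  have hv := vol_lower q x R t hR ht htR hx
  have hT : ENNReal.ofReal t ^ n ≠ 0 := by simp [ht]
  refine (jensen_avg volume _ (fun h => hT (by simpa [h] using hv)) ?_ u hu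
    (hi.mono_set inter_subset_left) _ r hr).trans ?_
  · exact measure_ne_top_of_subset inter_subset_left measure_closedBall_lt_top.ne
  gcongr
  have hk : Measurable (fun z => kerK u r e y z) := (kerK_meas u hu r e).comp measurable_prodMk_left
  unfold GG
  rw [← lintegral_const_mul _ hk]
  refine le_trans (setLIntegral_mono (by fun_prop) fun z hz => ?_)
    (lintegral_mono_set inter_subset_left)
  refine kerK_bound u r e hr he y z _ ?_
  have h1 : dist z x ≤ t := hz.2
  have h2 : dist y x ≤ t := hy
  linarith [dist_triangle_right y z x]

lemma step_a {n : ℕ} (u : Rn n → ℝ) (hu : Measurable u) (r e : ℝ) (hr : 1 ≤ r) (he : 0 ≤ e)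
    (q x : Rn n) (R t : ℝ) (hR : 0 < R) (ht : 0 < t) (htR : t ≤ 2 * R)
    (hx : x ∈ closedBall q R) (hi : IntegrableOn u (closedBall q R)) :
    ENNReal.ofReal |(⨍ z in closedBall q R ∩ closedBall x t, u z) -
        ⨍ z in closedBall q R ∩ closedBall x (t / 2), u z| ^ r ≤
      (ENNReal.ofReal (t / 2) ^ n)⁻¹ * ((ENNReal.ofReal t ^ n)⁻¹ *
        (ENNReal.ofReal (n * (2 * t)) ^ e * FF u r e (closedBall q R) t x)) := by
  have hv := vol_lower q x R (t / 2) hR (by positivity) (by linarith) hx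
  have hT : ENNReal.ofReal (t / 2) ^ n ≠ 0 := by simp [ht]
  refine (jensen_avg volume _ (fun h => hT (by simpa [h] using hv)) ?_ u hu
    (hi.mono_set inter_subset_left) _ r hr).trans ?_
  · exact measure_ne_top_of_subset inter_subset_left measure_closedBall_lt_top.ne
  gcongr
  have hG := GG_meas u hu r e (closedBall q R)
  unfold FF
  rw [← lintegral_const_mul _ hG, ← lintegral_const_mul _ (by fun_prop)]
  have hss : closedBall q R ∩ closedBall x (t / 2) ⊆ closedBall q R ∩ closedBall x t :=
    inter_subset_inter_right _ (closedBall_subset_closedBall (by linarith))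
  refine le_trans (setLIntegral_mono (by fun_prop) fun y hy => ?_) (lintegral_mono_set hss)
  rw [abs_sub_comm]
  exact avg_bound u hu r e hr he q x R t hR ht htR hx hi y (hss hy).2

lemma num_b {n : ℕ} (t s r : ℝ) (ht : 0 < t) (hs : 0 < s) (hr : 1 ≤ r) :
    (ENNReal.ofReal t ^ n)⁻¹ * ENNReal.ofReal (n * (2 * t)) ^ ((n:ℝ) + s * r) =
      ENNReal.ofReal (n * 2) ^ ((n:ℝ) + s * r) * ENNReal.ofReal t ^ (s * r) := by
  have hsr : 0 < s * r := by positivity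
  rw [← mul_assoc, ENNReal.ofReal_mul (by positivity), ENNReal.mul_rpow_of_nonneg _ _ (by positivity),
    mul_left_comm, ← ENNReal.rpow_natCast, ← ENNReal.rpow_neg,
    ← ENNReal.rpow_add _ _ (by simpa using ht) (by simp)]
  congr 2; ring

lemma num_a {n : ℕ} (t s r : ℝ) (ht : 0 < t) (hs : 0 < s) (hr : 1 ≤ r) (X : ℝ≥0∞) :
    (ENNReal.ofReal (t / 2) ^ n)⁻¹ * ((ENNReal.ofReal t ^ n)⁻¹ *
        (ENNReal.ofReal (n * (2 * t)) ^ ((n:ℝ) + s * r) * X)) =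
      (2 ^ n * ENNReal.ofReal (n * 2) ^ ((n:ℝ) + s * r)) * ENNReal.ofReal t ^ (s * r - n) * X := by
  rw [← mul_assoc (_)⁻¹ _ X, num_b t s r ht hs hr]
  have h1 : (ENNReal.ofReal (t / 2) ^ n)⁻¹ = 2 ^ n * ENNReal.ofReal t ^ (-(n:ℝ)) := by
    rw [ENNReal.ofReal_div_of_pos (by norm_num), ENNReal.rpow_neg, ENNReal.rpow_natCast,
      div_eq_mul_inv, mul_pow, ENNReal.mul_inv (by simp [ht]) (by simp), mul_comm]
    congr 1
    rw [← ENNReal.inv_pow, inv_inv]; simp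
  rw [h1, sub_eq_add_neg (s * r), ENNReal.rpow_add (s * r) (-(n:ℝ)) (x := ENNReal.ofReal t)
    (by simpa using ht) (by simp)]
  ring


lemma ptwise {n : ℕ} (u : Rn n → ℝ) (hu : Measurable u) (r s : ℝ) (hr : 1 ≤ r) (hs : 0 < s)
    (q x : Rn n) (R : ℝ) (hR : 0 < R)
    (hx : x ∈ closedBall q R) (hi : IntegrableOn u (closedBall q R))
    (hG : GG u r (n + s * r) (closedBall q R) x ≠ ⊤) :
    ENNReal.ofReal |u x - ⨍ z in closedBall q R, u z| ≤
      ∑' j : ℕ, ENNReal.ofReal |(⨍ z in closedBall q R ∩ closedBall x (2 * R / 2 ^ j), u z) -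
        ⨍ z in closedBall q R ∩ closedBall x (2 * R / 2 ^ j / 2), u z| := by
  set A : ℕ → ℝ := fun j => ⨍ z in closedBall q R ∩ closedBall x (2 * R / 2 ^ j), u z with hA
  have hr0 : 0 < r := by linarith
  have hsr : 0 < s * r := by positivity
  have hA1 : ∀ j, (⨍ z in closedBall q R ∩ closedBall x (2 * R / 2 ^ j / 2), u z) = A (j + 1) := by
    intro j
    simp only [hA, pow_succ, div_div]
  have hA0 : (⨍ z in closedBall q R, u z) = A 0 := by
    have : closedBall q R ⊆ closedBall x (2 * R) := by
      refine closedBall_subset_closedBall' ?_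
      have : dist x q ≤ R := hx
      rw [dist_comm]; linarith
    simp only [hA, pow_zero, div_one, inter_eq_left.2 this]
  have htle : ∀ k : ℕ, 2 * R / 2 ^ k ≤ 2 * R := fun k =>
    div_le_self (by positivity) (one_le_pow₀ (by norm_num))
  have hb : ∀ k, ENNReal.ofReal |u x - A k| ≤
      (ENNReal.ofReal (n * 2) ^ ((n:ℝ) + s * r) * ENNReal.ofReal (2 * R / 2 ^ k) ^ (s * r) *
        GG u r (n + s * r) (closedBall q R) x) ^ r⁻¹ := by
    intro k
    have ht : 0 < 2 * R / 2 ^ k := by positivity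
    have := avg_bound u hu r (n + s * r) hr (by positivity) q x R _ hR ht (htle k) hx hi x
      (mem_closedBall_self ht.le)
    rw [← mul_assoc, num_b _ s r ht hs hr] at this
    have := ENNReal.rpow_le_rpow this (inv_nonneg.2 hr0.le)
    rwa [← ENNReal.rpow_mul, mul_inv_cancel₀ hr0.ne', ENNReal.rpow_one] at this
  have hlim : Tendsto (fun k : ℕ => (ENNReal.ofReal (n * 2) ^ ((n:ℝ) + s * r) *
      ENNReal.ofReal (2 * R / 2 ^ k) ^ (s * r) *
        GG u r (n + s * r) (closedBall q R) x) ^ r⁻¹) atTop (𝓝 0) := by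
    have h1 : Tendsto (fun k : ℕ => 2 * R / 2 ^ k) atTop (𝓝 0) :=
      tendsto_const_nhds.div_atTop (tendsto_pow_atTop_atTop_of_one_lt (by norm_num))
    have h2 : Tendsto (fun k : ℕ => ENNReal.ofReal (2 * R / 2 ^ k)) atTop (𝓝 0) := by
      simpa using ENNReal.tendsto_ofReal h1
    have h3 := h2.ennrpow_const (s * r)
    rw [ENNReal.zero_rpow_of_pos hsr] at h3
    have h4 := ENNReal.Tendsto.const_mul (a := ENNReal.ofReal (n * 2) ^ ((n:ℝ) + s * r)) h3
      (Or.inr (ENNReal.rpow_ne_top_of_nonneg (by positivity) ENNReal.ofReal_ne_top))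
    have h5 := (ENNReal.Tendsto.mul_const h4 (Or.inr hG)).ennrpow_const r⁻¹
    simpa [hr0] using h5
  have htele : ∀ k, ENNReal.ofReal |A k - A 0| ≤
      ∑ j ∈ Finset.range k, ENNReal.ofReal |A j - A (j + 1)| := by
    intro k
    rw [← ENNReal.ofReal_sum_of_nonneg (fun _ _ => abs_nonneg _), ← Finset.sum_range_sub A k]
    refine ENNReal.ofReal_le_ofReal ((Finset.abs_sum_le_sum_abs _ _).trans (le_of_eq ?_))
    simp only [abs_sub_comm]
  simp only [hA1, hA0]
  have hmain : ∀ k, ENNReal.ofReal |u x - A 0| ≤ (ENNReal.ofReal (n * 2) ^ ((n:ℝ) + s * r) *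
      ENNReal.ofReal (2 * R / 2 ^ k) ^ (s * r) *
        GG u r (n + s * r) (closedBall q R) x) ^ r⁻¹ + ∑' j, ENNReal.ofReal |A j - A (j + 1)| := by
    intro k
    calc ENNReal.ofReal |u x - A 0| ≤ ENNReal.ofReal (|u x - A k| + |A k - A 0|) :=
          ENNReal.ofReal_le_ofReal (abs_sub_le _ _ _)
      _ = ENNReal.ofReal |u x - A k| + ENNReal.ofReal |A k - A 0| :=
          ENNReal.ofReal_add (abs_nonneg _) (abs_nonneg _)
      _ ≤ _ := add_le_add (hb k) ((htele k).trans (ENNReal.sum_le_tsum _))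
  have := ge_of_tendsto' (hlim.add_const _) hmain
  simpa using this

lemma term_bound (n : ℕ) (p r s : ℝ) (hp : 1 ≤ p) (hr : 1 ≤ r)
    (h1 : 0 ≤ 1 / r - 1 / p) (D C T F I : ℝ≥0∞) (hT0 : T ≠ 0) (hT : T ≠ ⊤) (hF : F ≤ I)
    (h : D ^ r ≤ C * T ^ (s * r - n) * F) :
    D ≤ C ^ (1 / r) * I ^ (1 / r - 1 / p) *
      (T ^ (s - n * (1 / r - 1 / p)) * (T ^ (-(n:ℝ)) * F) ^ (1 / p)) := by
  have hr0 : 0 < r := by linarith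
  have hp0 : 0 < p := by linarith
  have h' := ENNReal.rpow_le_rpow h (z := 1 / r) (by positivity)
  rw [← ENNReal.rpow_mul, mul_one_div_cancel hr0.ne', ENNReal.rpow_one,
    ENNReal.mul_rpow_of_nonneg _ _ (by positivity), ENNReal.mul_rpow_of_nonneg _ _ (by positivity),
    ← ENNReal.rpow_mul] at h'
  refine h'.trans ?_
  have e1 : F ^ (1 / r) ≤ F ^ (1 / p) * I ^ (1 / r - 1 / p) := by
    calc F ^ (1 / r) = F ^ (1 / p) * F ^ (1 / r - 1 / p) := by
          rw [← ENNReal.rpow_add_of_nonneg _ _ (by positivity) h1]; congr 1; ring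
      _ ≤ _ := by gcongr
  have e2 : T ^ ((s * r - n) * (1 / r)) = T ^ (s - n * (1 / r - 1 / p)) * T ^ (-(n:ℝ) * (1 / p)) := by
    rw [← ENNReal.rpow_add _ _ hT0 hT]; congr 1; field_simp; ring
  rw [e2, ENNReal.mul_rpow_of_nonneg _ _ (by positivity), ← ENNReal.rpow_mul]
  calc _ ≤ C ^ (1 / r) * (T ^ (s - n * (1 / r - 1 / p)) * T ^ (-(n:ℝ) * (1 / p))) *
        (F ^ (1 / p) * I ^ (1 / r - 1 / p)) := by gcongr
    _ = _ := by
      generalize T ^ (s - n * (1 / r - 1 / p)) = a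
      generalize T ^ (-(n:ℝ) * (1 / p)) = b
      generalize F ^ (1 / p) = c
      generalize I ^ (1 / r - 1 / p) = d
      ring

lemma geom (T0 δ : ℝ) (hT : 0 < T0) (hδ : 0 < δ) :
    ∑' j : ℕ, ENNReal.ofReal (T0 / 2 ^ j) ^ δ =
      ENNReal.ofReal T0 ^ δ * (1 - (2:ℝ≥0∞)⁻¹ ^ δ)⁻¹ := by
  rw [← ENNReal.tsum_geometric, ← ENNReal.tsum_mul_left]
  congr 1; ext j
  rw [div_eq_mul_inv, ENNReal.ofReal_mul hT.le, ENNReal.mul_rpow_of_nonneg _ _ hδ.le,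
    ← inv_pow, ENNReal.ofReal_pow (by positivity), ENNReal.ofReal_inv_of_pos (by norm_num),
    ← ENNReal.rpow_natCast, ← ENNReal.rpow_natCast, ← ENNReal.rpow_mul, ← ENNReal.rpow_mul, mul_comm δ]
  simp

lemma geom_ne_top (δ : ℝ) (hδ : 0 < δ) : (1 - (2:ℝ≥0∞)⁻¹ ^ δ)⁻¹ ≠ ⊤ := by
  have : (2:ℝ≥0∞)⁻¹ ^ δ < 1 := ENNReal.rpow_lt_one (by simp) hδ
  simpa [tsub_eq_zero_iff_le] using this

theorem fractional_sobolev_poincare (n : ℕ) (hn : 2 ≤ n) (p r s : ℝ)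
    (hp : 1 ≤ p) (hr : 1 ≤ r) (hs0 : 0 < s) (hs1 : s < 1)
    (h1 : 0 ≤ 1 / r - 1 / p) (h2 : 1 / r - 1 / p < s / n) :
    ∃ c > 0, ∀ (xQ : Rn n) (rQ : ℝ), 0 < rQ → ∀ u : Rn n → ℝ, Measurable u →
      (∫⁻ y in closedBall xQ rQ, ENNReal.ofReal |u y| ^ r) < ⊤ →
      (∫⁻ x in closedBall xQ rQ,
          ENNReal.ofReal |u x - ⨍ y in closedBall xQ rQ, u y| ^ p)
        ≤ ENNReal.ofReal c *
            volume (closedBall xQ rQ) ^ (1 + p * s / n - p / r) *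
            (∫⁻ x in closedBall xQ rQ, ∫⁻ y in closedBall xQ rQ,
                ENNReal.ofReal |u x - u y| ^ r *
                  ENNReal.ofReal (euclDist x y) ^ (-((n:ℝ) + s * r))) ^ (p / r) := by
  have hr0 : 0 < r := by linarith
  have hp0 : 0 < p := by linarith
  have hn0 : (0:ℝ) < n := by exact_mod_cast (by omega : 0 < n)
  have hpr : 0 < p / r := by positivity
  have hδ : 0 < s - n * (1 / r - 1 / p) := by
    rw [lt_div_iff₀ hn0] at h2; linarith
  set δ := s - n * (1 / r - 1 / p) with hδdef
  set S : ℝ≥0∞ := (1 - (2:ℝ≥0∞)⁻¹ ^ δ)⁻¹ with hS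
  have hStop : S ≠ ⊤ := geom_ne_top δ hδ
  set C1 : ℝ≥0∞ := 2 ^ n * ENNReal.ofReal (n * 2) ^ ((n:ℝ) + s * r) with hC1
  have hC1top : C1 ≠ ⊤ :=
    ENNReal.mul_ne_top (by simp) (ENNReal.rpow_ne_top_of_nonneg (by positivity) ENNReal.ofReal_ne_top)
  set X : ℝ≥0∞ := C1 ^ (p / r) * 2 ^ n * S ^ p with hX
  have hXtop : X ≠ ⊤ := by
    refine ENNReal.mul_ne_top (ENNReal.mul_ne_top ?_ (by simp)) ?_ <;>
      exact ENNReal.rpow_ne_top_of_nonneg (by positivity) (by assumption)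
  have hXc : X ≤ ENNReal.ofReal (X.toReal + 1) := by
    rw [ENNReal.le_ofReal_iff_toReal_le hXtop (by positivity)]; linarith
  refine ⟨X.toReal + 1, by positivity, fun q R hR u hu hLr => ?_⟩
  set Q := closedBall q R with hQ
  change _ ≤ _ * _ * (∫⁻ x in Q, GG u r (n + s * r) Q x) ^ (p / r)
  set I := ∫⁻ x in Q, GG u r (n + s * r) Q x with hI
  have hvol : volume Q = ENNReal.ofReal (2 * R) ^ n := by
    rw [hQ, Real.volume_pi_closedBall _ hR.le, ENNReal.ofReal_pow (by positivity)]; simp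
  have hT00 : ENNReal.ofReal (2 * R) ≠ 0 := by simp [hR]
  have hv0 : volume Q ≠ 0 := by rw [hvol]; exact pow_ne_zero _ hT00
  have hvt : volume Q ≠ ⊤ := by rw [hvol]; exact ENNReal.pow_ne_top ENNReal.ofReal_ne_top
  by_cases hItop : I = ⊤
  · rw [hItop, ENNReal.top_rpow_of_pos hpr, ENNReal.mul_top]
    · exact le_top
    · refine mul_ne_zero ?_ (ENNReal.rpow_pos (pos_iff_ne_zero.2 hv0) hvt).ne'
      simp only [ne_eq, ENNReal.ofReal_eq_zero, not_le]; positivity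
  have hfin : IsFiniteMeasure (volume.restrict Q) := ⟨by simpa using hvt.lt_top⟩
  have hi : IntegrableOn u Q := by
    refine ⟨hu.aestronglyMeasurable, ?_⟩
    have hb : ∀ y, ‖u y‖ₑ ≤ 1 + ENNReal.ofReal |u y| ^ r := by
      intro y
      rw [Real.enorm_eq_ofReal_abs]
      rcases le_total (ENNReal.ofReal |u y|) 1 with h | h
      · exact h.trans le_self_add
      · refine le_trans ?_ le_add_self
        simpa using ENNReal.rpow_le_rpow_of_exponent_le h hr
    refine (lintegral_mono hb).trans_lt ?_
    rw [lintegral_add_left measurable_const]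
    refine ENNReal.add_lt_top.2 ⟨?_, hLr⟩
    simpa using hvt.lt_top
  set t : ℕ → ℝ := fun j => 2 * R / 2 ^ j with htdef
  have ht : ∀ j, 0 < t j := fun j => by positivity
  have htle : ∀ k : ℕ, t k ≤ 2 * R := fun k =>
    div_le_self (by positivity) (one_le_pow₀ (by norm_num))
  have hGm := GG_meas u hu r (n + s * r) Q
  have hFm := fun j => FF_meas u hu r (n + s * r) Q (t j)
  have hae : ∀ᵐ x ∂(volume.restrict Q), GG u r (n + s * r) Q x < ⊤ :=
    ae_lt_top hGm hItop
  set W : ℝ≥0∞ := ∑' j, ENNReal.ofReal (t j) ^ δ with hW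
  set M : ℝ≥0∞ := (C1 ^ (1 / r) * I ^ (1 / r - 1 / p)) ^ p with hM
  have hpt : ∀ᵐ x ∂(volume.restrict Q), ENNReal.ofReal |u x - ⨍ y in Q, u y| ^ p ≤
      M * (W ^ (p - 1) * ∑' j, ENNReal.ofReal (t j) ^ δ *
        (ENNReal.ofReal (t j) ^ (-(n:ℝ)) * FF u r (n + s * r) Q (t j) x)) := by
    filter_upwards [hae, ae_restrict_mem measurableSet_closedBall] with x hx hxQ
    have a1 := ptwise u hu r s hr hs0 q x R hR hxQ hi hx.ne
    have a2 : ENNReal.ofReal |u x - ⨍ y in Q, u y| ≤ (C1 ^ (1 / r) * I ^ (1 / r - 1 / p)) *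
        ∑' j, (ENNReal.ofReal (t j) ^ δ * (ENNReal.ofReal (t j) ^ (-(n:ℝ)) *
          FF u r (n + s * r) Q (t j) x) ^ (1 / p)) := by
      refine a1.trans ?_
      rw [← ENNReal.tsum_mul_left]
      refine ENNReal.tsum_le_tsum fun j => ?_
      refine term_bound n p r s hp hr h1 _ C1 _ _ I (by simpa using ht j) (by simp) ?_ ?_
      · exact lintegral_mono_set inter_subset_left
      · have := step_a u hu r (n + s * r) hr (by positivity) q x R (t j) hR (ht j) (htle j) hxQ hi
        rwa [num_a (t j) s r (ht j) hs0 hr] at this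
    have a3 := ENNReal.rpow_le_rpow a2 hp0.le
    rw [ENNReal.mul_rpow_of_nonneg _ _ hp0.le] at a3
    refine a3.trans ?_
    rw [hM]
    gcongr
    refine (tsum_weight p hp _ _).trans (le_of_eq ?_)
    simp only [← ENNReal.rpow_mul, one_div, inv_mul_cancel₀ hp0.ne', ENNReal.rpow_one, hW]
  refine (lintegral_mono_ae hpt).trans ?_
  have hm : ∀ j, Measurable fun x => ENNReal.ofReal (t j) ^ δ *
        (ENNReal.ofReal (t j) ^ (-(n:ℝ)) * FF u r (n + s * r) Q (t j) x) := fun j =>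
    ((hFm j).const_mul _).const_mul _
  rw [lintegral_const_mul _ ((Measurable.tsum hm).const_mul _),
    lintegral_const_mul _ (Measurable.tsum hm), lintegral_tsum (fun j => (hm j).aemeasurable)]
  have hsum : ∑' j, ∫⁻ x in Q, ENNReal.ofReal (t j) ^ δ *
        (ENNReal.ofReal (t j) ^ (-(n:ℝ)) * FF u r (n + s * r) Q (t j) x) ≤ W * (2 ^ n * I) := by
    rw [hW, ← ENNReal.tsum_mul_right]
    refine ENNReal.tsum_le_tsum fun j => ?_
    rw [lintegral_const_mul _ ((hFm j).const_mul _), lintegral_const_mul _ (hFm j)]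
    refine mul_le_mul_right ?_ _
    calc _ ≤ ENNReal.ofReal (t j) ^ (-(n:ℝ)) * ((2 ^ n * ENNReal.ofReal (t j) ^ n) * I) := by
          exact mul_le_mul_right (FF_int u hu r _ Q (t j) (ht j)) _
      _ = (ENNReal.ofReal (t j) ^ (-(n:ℝ)) * ENNReal.ofReal (t j) ^ (n:ℝ)) * (2 ^ n * I) := by
          rw [ENNReal.rpow_natCast]; ring
      _ = 2 ^ n * I := by
          rw [← ENNReal.rpow_add _ _ (by simpa using ht j) (by simp)]; simp
  have hWeq : W = ENNReal.ofReal (2 * R) ^ δ * S := geom (2 * R) δ (by positivity) hδ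
  have hWp : W ^ (p - 1) * W = W ^ p := by
    have := ENNReal.rpow_add_of_nonneg (x := W) (p - 1) 1 (by linarith) zero_le_one
    rw [ENNReal.rpow_one] at this
    rw [← this]; simp
  have hWv : W ^ p = volume Q ^ (1 + p * s / n - p / r) * S ^ p := by
    rw [hWeq, ENNReal.mul_rpow_of_nonneg _ _ hp0.le, hvol, ← ENNReal.rpow_natCast,
      ← ENNReal.rpow_mul, ← ENNReal.rpow_mul]
    congr 2
    rw [hδdef]; field_simp; ring
  have hMI : M * I = C1 ^ (p / r) * I ^ (p / r) := by
    rw [hM, ENNReal.mul_rpow_of_nonneg _ _ hp0.le, ← ENNReal.rpow_mul, ← ENNReal.rpow_mul,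
      mul_assoc]
    have e : 0 ≤ (1 / r - 1 / p) * p := by positivity
    have e2 : I ^ ((1 / r - 1 / p) * p) * I = I ^ (p / r) := by
      have := ENNReal.rpow_add_of_nonneg (x := I) _ _ e zero_le_one
      rw [ENNReal.rpow_one] at this
      rw [← this]; congr 1; field_simp; ring
    rw [e2]; congr 2; ring
  calc _ ≤ M * (W ^ (p - 1) * (W * (2 ^ n * I))) := by gcongr
    _ = (W ^ (p - 1) * W) * 2 ^ n * (M * I) := by ring
    _ = X * volume Q ^ (1 + p * s / n - p / r) * I ^ (p / r) := by
      rw [hWp, hWv, hMI, hX]; ring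
    _ ≤ _ := by gcongr
end
end

section
/- Let S ⊆ ℝⁿ be a d-set with n−1 < d < n, let 1 < p < ∞, k ∈ ℕ, and let f ∈ L^p(ℝⁿ) be such that ℋᵈ-almost every point of S is a Lebesgue point of f. Let 𝒲_S be a Whitney decomposition of ℝⁿ ∖ S, and for each Q = Q(x_Q, r_Q) ∈ 𝒲_S fix a point a_Q ∈ S with ‖x_Q − a_Q‖_∞ = dist(x_Q, S) and set a(Q) := Q(a_Q, r_Q/2). Suppose (P_Q)_Q is a family, indexed by cubes Q in ℝⁿ, of maps sending f to polynomials of degree ≤ k−1, with constants A, C₀ > 0 such that: (near-best approximation) (⨍_Q |f − P_Q f|^p dx)^{1/p} ≤ A·ℰ_k(f,Q)_{L^p} for every cube Q; (i) if Q' ⊆ Q are cubes with |Q'| ≥ c|Q| then |P_Q f(z) − P_{Q'} f(z)| ≤ C(c,n,k) ⨍_Q |f − P_Q f| dy for every z ∈ Q'; (ii) lim_{j→∞} P_{Q(z,2^{−j})} f(z) = f̄(z) at every Lebesgue point z of f. Then there is a constant C such that for every i ∈ ℕ, (Σ_{Q ∈ 𝒲_S, ℓ(Q) = 2^{−(i+5)}}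 ⨍_{32a(Q) ∩ S} |f̄ − P_{32a(Q)} f|^p dℋᵈ)^{1/p} ≤ C 2^{id/p} Σ_{j=i}^∞ (∫_S ℰ_k(f, Q(x,2^{−j}))_{L^p}^p dℋᵈ(x))^{1/p}. -/
open MeasureTheory Metric Set Filter
open scoped ENNReal NNReal Topology

noncomputable section

/-- `S` is an (Ahlfors) `d`-set with regularity constant `C`. -/
def IsDSet {n : ℕ} (S : Set (Rn n)) (d C : ℝ) : Prop :=
  IsClosed S ∧ 1 < C ∧ ∀ w ∈ S, ∀ r : ℝ, 0 < r → r ≤ 1 →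
    ENNReal.ofReal (C⁻¹ * r ^ d) ≤ μH[d] (closedBall w r ∩ S) ∧
      μH[d] (closedBall w r ∩ S) ≤ ENNReal.ofReal (C * r ^ d)

/-- The closed dyadic cube `2^{−j}(m + [0,1]ⁿ)`. Its sup-norm diameter is `2^{−j}`. -/
def dyadicCube {n : ℕ} (j : ℤ) (m : Fin n → ℤ) : Set (Rn n) :=
  {y | ∀ i, (m i : ℝ) * 2 ^ (-j) ≤ y i ∧ y i ≤ ((m i : ℝ) + 1) * 2 ^ (-j)}

/-- The center of the dyadic cube `2^{−j}(m + [0,1]ⁿ)`. -/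
def dyadicCenter {n : ℕ} (j : ℤ) (m : Fin n → ℤ) : Rn n :=
  fun i => ((m i : ℝ) + 1 / 2) * 2 ^ (-j)

/-- `W` is a Whitney decomposition of `ℝⁿ ∖ S` (dyadic cubes indexed by `(j,m)`). -/
def IsWhitney {n : ℕ} (S : Set (Rn n)) (W : Set (ℤ × (Fin n → ℤ))) : Prop :=
  (∀ Q ∈ W, ∀ Q' ∈ W, Q ≠ Q' →
      interior (dyadicCube Q.1 Q.2) ∩ interior (dyadicCube Q'.1 Q'.2) = ∅) ∧
  (⋃ Q ∈ W, dyadicCube Q.1 Q.2) = Sᶜ ∧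
  (∀ Q ∈ W, (∀ x ∈ dyadicCube Q.1 Q.2, (2:ℝ) ^ (-Q.1) ≤ infDist x S) ∧
      (∃ x ∈ dyadicCube Q.1 Q.2, infDist x S ≤ 4 * (2:ℝ) ^ (-Q.1)))

/-- The normalized local best approximation `ℰ_k(f, Q(x,r))_{L^u}`. -/
def localApprox {n : ℕ} (k : ℕ) (u : ℝ) (f : Rn n → ℝ) (x : Rn n) (r : ℝ) : ℝ≥0∞ :=
  ⨅ (P : MvPolynomial (Fin n) ℝ) (_ : P.totalDegree ≤ k - 1),
    ((volume (closedBall x r))⁻¹ *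
      ∫⁻ y in closedBall x r, ENNReal.ofReal |f y - MvPolynomial.eval y P| ^ u) ^ (1 / u)

/-- `x` is a Lebesgue point of `f`. -/
def LebesguePoint {n : ℕ} (f : Rn n → ℝ) (x : Rn n) : Prop :=
  Tendsto (fun ρ : ℝ => ⨍ y in closedBall x ρ, |f y - f x|) (𝓝[>] 0) (𝓝 0)

lemma mink_tsum {α : Type*} [MeasurableSpace α] (μ : Measure α) (p : ℝ) (hp : 1 ≤ p)
    (E : ℕ → α → ℝ≥0∞) (hE : ∀ j, Measurable (E j)) :
    (∫⁻ x, (∑' j, E j x) ^ p ∂μ) ^ (1/p) ≤ ∑' j, (∫⁻ x, E j x ^ p ∂μ) ^ (1/p) := by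
  have hp0 : 0 < p := by linarith
  have hfin : ∀ N : ℕ, (∫⁻ x, (∑ j ∈ Finset.range N, E j x) ^ p ∂μ) ^ (1/p)
      ≤ ∑ j ∈ Finset.range N, (∫⁻ x, E j x ^ p ∂μ) ^ (1/p) := by
    intro N
    induction N with
    | zero => simp [hp0]
    | succ N ih =>
      simp only [Finset.sum_range_succ]
      have := ENNReal.lintegral_Lp_add_le (μ := μ) (p := p)
        (f := fun x => ∑ j ∈ Finset.range N, E j x) (g := E N)
        (Finset.measurable_sum _ (fun j _ => hE j)).aemeasurable (hE N).aemeasurable hp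
      refine this.trans ?_
      gcongr
  have ht : Tendsto (fun N : ℕ => (∫⁻ x, (∑ j ∈ Finset.range N, E j x) ^ p ∂μ) ^ (1/p)) atTop
      (𝓝 ((∫⁻ x, (∑' j, E j x) ^ p ∂μ) ^ (1/p))) := by
    refine (ENNReal.continuous_rpow_const.tendsto _).comp ?_
    refine lintegral_tendsto_of_tendsto_of_monotone ?_ ?_ ?_
    · intro N
      exact ((Finset.measurable_sum _ (fun j _ => hE j)).pow_const p).aemeasurable
    · refine Eventually.of_forall fun x a b hab => ?_
      dsimp only
      gcongr
    · refine Eventually.of_forall fun x => ?_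
      exact (ENNReal.continuous_rpow_const.tendsto _).comp
        (ENNReal.tendsto_nat_tsum _)
  refine le_of_tendsto ht (Eventually.of_forall fun N => (hfin N).trans ?_)
  exact ENNReal.sum_le_tsum _

lemma usc_ball {n : ℕ} (ν : Measure (Rn n)) (hν : ∀ x R, ν (closedBall x R) < ⊤) (r : ℝ)
    (hr : 0 ≤ r) : UpperSemicontinuous (fun x => ν (closedBall x r)) := by
  intro x y hy
  have h1 : Tendsto (fun s => ν (cthickening s (closedBall x r))) (𝓝 0)
      (𝓝 (ν (closedBall x r))) := by
    refine tendsto_measure_cthickening_of_isClosed ⟨1, one_pos, ?_⟩ isClosed_closedBall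
    rw [cthickening_closedBall zero_le_one hr]
    exact (hν _ _).ne
  have h2 : ∀ᶠ s in 𝓝 (0:ℝ), ν (cthickening s (closedBall x r)) < y :=
    h1.eventually (gt_mem_nhds hy)
  have h3 : Tendsto (fun x' => dist x' x) (𝓝 x) (𝓝 0) := by
    have : Continuous (fun x' : Rn n => dist x' x) := by fun_prop
    simpa using this.tendsto x
  filter_upwards [h3.eventually h2] with x' hx'
  refine lt_of_le_of_lt (measure_mono ?_) hx'
  rw [cthickening_closedBall dist_nonneg hr]
  exact closedBall_subset_closedBall' (by linarith)

lemma fin_ball {n : ℕ} (p : ℝ) (hp : 1 < p) (f : Rn n → ℝ) (hmf : Measurable f)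
    (hfLp : (∫⁻ x, ENNReal.ofReal |f x| ^ p) < ⊤) (P : MvPolynomial (Fin n) ℝ) (x : Rn n) (R : ℝ) :
    ∫⁻ y in closedBall x R, ENNReal.ofReal |f y - MvPolynomial.eval y P| ^ p < ⊤ := by
  have hc : Continuous (fun y : Rn n => MvPolynomial.eval y P) := MvPolynomial.continuous_eval P
  obtain ⟨M, hM⟩ := (isCompact_closedBall x R).exists_bound_of_continuousOn hc.continuousOn
  calc _ ≤ ∫⁻ y in closedBall x R, 2 ^ (p-1) * (ENNReal.ofReal |f y| ^ p + ENNReal.ofReal M ^ p) := by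
        refine setLIntegral_mono (by fun_prop) fun y hy => ?_
        refine le_trans ?_ (ENNReal.rpow_add_le_mul_rpow_add_rpow _ _ hp.le)
        have : 0 < p := by linarith
        gcongr
        rw [← ENNReal.ofReal_add (abs_nonneg _) ((norm_nonneg _).trans (hM y hy))]
        apply ENNReal.ofReal_le_ofReal
        have := hM y hy
        rw [Real.norm_eq_abs] at this
        have := abs_sub (f y) (MvPolynomial.eval y P)
        linarith
    _ = 2 ^ (p-1) * ((∫⁻ y in closedBall x R, ENNReal.ofReal |f y| ^ p)
          + ENNReal.ofReal M ^ p * volume (closedBall x R)) := by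
        rw [lintegral_const_mul _ (by fun_prop), lintegral_add_right _ (by fun_prop)]
        simp
    _ < ⊤ := by
        refine ENNReal.mul_lt_top (by finiteness) (ENNReal.add_lt_top.2 ⟨?_, ?_⟩)
        · exact (setLIntegral_le_lintegral _ _).trans_lt hfLp
        · refine ENNReal.mul_lt_top ?_ measure_closedBall_lt_top
          exact ENNReal.rpow_lt_top_of_nonneg (by linarith) ENNReal.ofReal_ne_top

lemma localApprox_meas {n : ℕ} (k : ℕ) (p : ℝ) (hp : 1 < p) (f : Rn n → ℝ) (hmf : Measurable f)
    (hfLp : (∫⁻ x, ENNReal.ofReal |f x| ^ p) < ⊤) (r : ℝ) (hr : 0 < r) :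
    Measurable (fun x => localApprox k p f x r) := by
  apply UpperSemicontinuous.measurable
  unfold localApprox
  refine upperSemicontinuous_biInf fun P _ => ?_
  have hus := usc_ball (volume.withDensity
    (fun y => ENNReal.ofReal |f y - MvPolynomial.eval y P| ^ p)) (fun x R => by
      rw [withDensity_apply _ measurableSet_closedBall]
      exact fin_ball p hp f hmf hfLp P x R) r hr.le
  simp only [withDensity_apply _ measurableSet_closedBall, Real.volume_pi_closedBall _ hr.le] at hus ⊢
  have hcont : Continuous (fun t : ℝ≥0∞ =>
      ((ENNReal.ofReal ((2 * r) ^ Fintype.card (Fin n)))⁻¹ * t) ^ (1/p)) := by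
    refine ENNReal.continuous_rpow_const.comp (ENNReal.continuous_const_mul ?_)
    simp only [ne_eq, ENNReal.inv_eq_top, ENNReal.ofReal_eq_zero, not_le]
    positivity
  refine hcont.comp_upperSemicontinuous hus ?_
  intro a b hab
  dsimp only
  gcongr

lemma avg_le {n : ℕ} (p : ℝ) (hp : 1 < p) (g : Rn n → ℝ) (hg : Measurable g) (x : Rn n) (r : ℝ)
    (hr : 0 < r) :
    (volume (closedBall x r))⁻¹ * ∫⁻ y in closedBall x r, ENNReal.ofReal |g y| ≤
    ((volume (closedBall x r))⁻¹ * ∫⁻ y in closedBall x r, ENNReal.ofReal |g y| ^ p) ^ (1/p) := by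
  set v := volume (closedBall x r) with hv
  have hv0 : v ≠ 0 := (measure_closedBall_pos _ _ hr).ne'
  have hvt : v ≠ ⊤ := measure_closedBall_lt_top.ne
  have : IsProbabilityMeasure (v⁻¹ • volume.restrict (closedBall x r)) := by
    constructor
    simp [← hv, ENNReal.inv_mul_cancel hv0 hvt]
  have := eLpNorm'_le_eLpNorm'_of_exponent_le one_pos hp.le
    (v⁻¹ • volume.restrict (closedBall x r)) (f := g) hg.aestronglyMeasurable
  simpa [eLpNorm'_eq_lintegral_enorm, Real.enorm_eq_ofReal_abs, lintegral_smul_measure] using this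

lemma card_near {n : ℕ} (j : ℤ) (z : Rn n) :
    ∃ F : Finset (Fin n → ℤ), F.card ≤ 30 ^ n ∧
      ∀ m, dist (dyadicCenter j m) z ≤ 13 * (2:ℝ) ^ (-j) → m ∈ F := by
  have hl : (0:ℝ) < 2 ^ (-j) := by positivity
  refine ⟨Fintype.piFinset fun l => Finset.Icc (⌊z l / 2 ^ (-j)⌋ - 14) (⌊z l / 2 ^ (-j)⌋ + 14),
    ?_, fun m hm => ?_⟩
  · rw [Fintype.card_piFinset]
    calc _ ≤ ∏ l : Fin n, 30 := by
          gcongr with l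
          rw [Int.card_Icc]; omega
      _ = _ := by simp
  · rw [Fintype.mem_piFinset]
    intro l
    have h := (dist_le_pi_dist _ _ l).trans hm
    rw [Real.dist_eq, dyadicCenter] at h
    set t := z l / 2 ^ (-j) with ht
    have hz : z l = t * 2 ^ (-j) := by rw [ht]; field_simp
    rw [hz, ← sub_mul, abs_mul, abs_of_pos hl] at h
    have h' := abs_le.1 (le_of_mul_le_mul_right h hl)
    have f1 := Int.floor_le t
    have f2 := Int.lt_floor_add_one t
    rw [Finset.mem_Icc]
    constructor
    · have : ((⌊t⌋ - 15 : ℤ) : ℝ) < m l := by push_cast; linarith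
      have := Int.cast_lt.1 this
      omega
    · have : (m l : ℝ) < ((⌊t⌋ + 15 : ℤ) : ℝ) := by push_cast; linarith
      have := Int.cast_lt.1 this
      omega

lemma overlap {α ι β : Type*} [MeasurableSpace α] [Countable ι] (μ : Measure α) (B : ι → Set α)
    (hB : ∀ q, MeasurableSet (B q)) (S : Set α) (g : α → ℝ≥0∞) (hg : Measurable g)
    (N : ℕ) (φ : ι → β) (hφ : Function.Injective φ)
    (h : ∀ z, ∃ F : Finset β, F.card ≤ N ∧ ∀ q, z ∈ B q → φ q ∈ F) :
    ∑' q, ∫⁻ z in B q ∩ S, g z ∂μ ≤ N * ∫⁻ z in S, g z ∂μ := by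
  classical
  have h1 : ∀ q, ∫⁻ z in B q ∩ S, g z ∂μ = ∫⁻ z in S, (B q).indicator g z ∂μ := by
    intro q
    rw [lintegral_indicator (hB q), Measure.restrict_restrict (hB q)]
  simp_rw [h1]
  rw [← lintegral_tsum (fun q => (hg.indicator (hB q)).aemeasurable),
    ← lintegral_const_mul _ hg]
  refine lintegral_mono fun z => ?_
  obtain ⟨F, hF, hq⟩ := h z
  rw [tsum_eq_sum (s := F.preimage φ hφ.injOn)]
  · calc _ ≤ ∑ q ∈ F.preimage φ hφ.injOn, g z :=
          Finset.sum_le_sum fun q _ => indicator_le_self _ _ _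
      _ = ((F.preimage φ hφ.injOn).card : ℝ≥0∞) * g z := by simp
      _ ≤ N * g z := by
          gcongr
          refine le_trans ?_ hF
          rw [← Finset.card_map ⟨φ, hφ⟩]
          apply Finset.card_le_card
          intro b hb
          simp only [Finset.mem_map, Finset.mem_preimage, Function.Embedding.coeFn_mk] at hb
          obtain ⟨a, ha, rfl⟩ := hb
          exact ha
  · intro q hqF
    rw [indicator_of_notMem]
    intro hz
    exact hqF (Finset.mem_preimage.2 (hq q hz))

lemma near_center {n : ℕ} (S : Set (Rn n)) (W : Set (ℤ × (Fin n → ℤ))) (hW : IsWhitney S W)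
    (Q : ℤ × (Fin n → ℤ)) (hQ : Q ∈ W) :
    infDist (dyadicCenter Q.1 Q.2) S ≤ 5 * (2:ℝ) ^ (-Q.1) := by
  obtain ⟨x, hx, hxS⟩ := (hW.2.2 Q hQ).2
  have hl : (0:ℝ) < 2 ^ (-Q.1) := by positivity
  have h1 : dist (dyadicCenter Q.1 Q.2) x ≤ 2 ^ (-Q.1) := by
    refine (dist_pi_le_iff hl.le).2 fun l => ?_
    have := hx l
    rw [Real.dist_eq, dyadicCenter, abs_le]
    constructor <;> nlinarith [this.1, this.2]
  have := infDist_le_infDist_add_dist (s := S) (x := dyadicCenter Q.1 Q.2) (y := x)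
  linarith

/-- **Estimate of boundary averages by local approximations** (Lemma 3.11).
Here `P` is a family of near-best polynomial projections indexed by cubes `Q(x,r)`
(i.e. `P x r` is the polynomial assigned to `Q(x,r)`), satisfying the near-best
approximation property with constant `A`, the comparison property (i) and the
convergence property (ii); `aQ Q ∈ S` realizes the sup-norm distance from the center
of the Whitney cube `Q` to `S`, and `a(Q) = Q(a_Q, r_Q/2)`, so that for `Q ∈ 𝒲_S`
with side `2^{−(i+5)}` the cube `32a(Q)` is `Q(a_Q, 8·2^{−(i+5)})`. -/
theorem boundary_average_estimate {n : ℕ} (hn : 2 ≤ n) (S : Set (Rn n)) (d C₀ : ℝ)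
    (hS : IsDSet S d C₀) (hd1 : (n : ℝ) - 1 < d) (hd2 : d < n)
    (p : ℝ) (hp : 1 < p) (k : ℕ)
    (f : Rn n → ℝ) (hmf : Measurable f)
    (hfLp : (∫⁻ x, ENNReal.ofReal |f x| ^ p) < ⊤)
    (hLeb : ∀ᵐ x ∂(μH[d]).restrict S, LebesguePoint f x)
    (W : Set (ℤ × (Fin n → ℤ))) (hW : IsWhitney S W)
    (aQ : ℤ × (Fin n → ℤ) → Rn n)
    (haQ : ∀ Q ∈ W, aQ Q ∈ S ∧
      dist (dyadicCenter Q.1 Q.2) (aQ Q) = infDist (dyadicCenter Q.1 Q.2) S)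
    (P : Rn n → ℝ → MvPolynomial (Fin n) ℝ)
    (hdeg : ∀ x r, (P x r).totalDegree ≤ k - 1)
    (A : ℝ) (hA : 0 < A)
    (hnear : ∀ (x : Rn n) (r : ℝ), 0 < r →
      ((volume (closedBall x r))⁻¹ * ∫⁻ y in closedBall x r,
          ENNReal.ofReal |f y - MvPolynomial.eval y (P x r)| ^ p) ^ (1/p)
        ≤ ENNReal.ofReal A * localApprox k p f x r)
    (hcomp : ∀ c : ℝ, 0 < c → ∃ C₁ > (0:ℝ), ∀ (x x' : Rn n) (r r' : ℝ), 0 < r' →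
      closedBall x' r' ⊆ closedBall x r →
      ENNReal.ofReal c * volume (closedBall x r) ≤ volume (closedBall x' r') →
      ∀ z ∈ closedBall x' r',
        ENNReal.ofReal |MvPolynomial.eval z (P x r) - MvPolynomial.eval z (P x' r')|
          ≤ ENNReal.ofReal C₁ * ((volume (closedBall x r))⁻¹ *
              ∫⁻ y in closedBall x r, ENNReal.ofReal |f y - MvPolynomial.eval y (P x r)|))
    (hconv : ∀ z : Rn n, LebesguePoint f z →
      Tendsto (fun j : ℕ => MvPolynomial.eval z (P z ((2:ℝ) ^ (-(j:ℤ))))) atTop (𝓝 (f z))) :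
    ∃ C > 0, ∀ i : ℕ,
      (∑' Q : {Q : ℤ × (Fin n → ℤ) // Q ∈ W ∧ Q.1 = (i:ℤ) + 5},
          (μH[d] (closedBall (aQ Q.1) (8 * (2:ℝ) ^ (-(i:ℤ) - 5)) ∩ S))⁻¹ *
            ∫⁻ z in closedBall (aQ Q.1) (8 * (2:ℝ) ^ (-(i:ℤ) - 5)) ∩ S,
              ENNReal.ofReal
                |f z - MvPolynomial.eval z (P (aQ Q.1) (8 * (2:ℝ) ^ (-(i:ℤ) - 5)))| ^ p
              ∂μH[d]) ^ (1/p)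
        ≤ ENNReal.ofReal C * (2:ℝ≥0∞) ^ ((i : ℝ) * d / p) *
            ∑' j : ℕ, (∫⁻ x in S,
                localApprox k p f x ((2:ℝ) ^ (-(i:ℤ) - (j:ℤ))) ^ p ∂μH[d]) ^ (1/p) := by
  classical
  obtain ⟨C₁, hC₁, hcmp⟩ := hcomp ((1/4:ℝ)^n) (by positivity)
  have hp0 : 0 < p := by linarith
  have hC₀ : 0 < C₀ := by linarith [hS.2.1]
  -- comparison step
  have step : ∀ (z x' : Rn n) (r r' : ℝ), 0 < r → r / 4 ≤ r' →
      closedBall x' r' ⊆ closedBall z r → z ∈ closedBall x' r' →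
      edist (MvPolynomial.eval z (P z r)) (MvPolynomial.eval z (P x' r'))
        ≤ ENNReal.ofReal (C₁ * A) * localApprox k p f z r := by
    intro z x' r r' hr hr' hsub hz
    have h0 : 0 < r' := by linarith
    rw [edist_dist, Real.dist_eq]
    refine (hcmp z x' r r' h0 hsub ?_ z hz).trans ?_
    · rw [Real.volume_pi_closedBall _ hr.le, Real.volume_pi_closedBall _ h0.le,
        ← ENNReal.ofReal_mul (by positivity)]
      apply ENNReal.ofReal_le_ofReal
      rw [Fintype.card_fin, ← mul_pow]
      exact pow_le_pow_left₀ (by positivity) (by linarith) _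
    · rw [ENNReal.ofReal_mul hC₁.le, mul_assoc]
      refine mul_le_mul_right ?_ _
      refine (avg_le p hp (fun y => f y - MvPolynomial.eval y (P z r)) ?_ z r hr).trans
        (hnear z r hr)
      exact hmf.sub (MvPolynomial.continuous_eval _).measurable
  set N : ℕ := 30 ^ n with hN
  refine ⟨(C₀ * 4 ^ d * N) ^ (1/p) * (2 * (C₁ * A)), by positivity, fun i => ?_⟩
  have hR : (8 * (2:ℝ) ^ (-(i:ℤ) - 5)) = 2 ^ (-(i:ℤ)) / 4 := by
    rw [zpow_sub₀ two_ne_zero]; norm_num; ring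
  rw [hR]
  set ρ : ℝ := 2 ^ (-(i:ℤ)) with hρ
  have hρ0 : 0 < ρ := by positivity
  have hρ1 : ρ ≤ 1 := zpow_le_one_of_nonpos₀ one_le_two (by simp)
  set E : ℕ → Rn n → ℝ≥0∞ := fun j x => localApprox k p f x ((2:ℝ) ^ (-(i:ℤ) - (j:ℤ))) with hE
  have hEm : ∀ j, Measurable (E j) := fun j =>
    localApprox_meas k p hp f hmf hfLp _ (by positivity)
  set K : ℝ≥0∞ := ENNReal.ofReal (C₁ * A) with hK
  -- pointwise bound
  have hpt : ∀ z, LebesguePoint f z → ∀ a, z ∈ closedBall a (ρ/4) →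
      ENNReal.ofReal |f z - MvPolynomial.eval z (P a (ρ/4))| ≤ 2 * K * ∑' j, E j z := by
    intro z hz a hza
    have hE0 : edist (MvPolynomial.eval z (P z ρ)) (MvPolynomial.eval z (P a (ρ/4)))
        ≤ K * E 0 z := by
      have := step z a ρ (ρ/4) hρ0 le_rfl (closedBall_subset_closedBall' (by
        have := mem_closedBall'.1 hza
        linarith)) hza
      simpa only [hE, Nat.cast_zero, sub_zero] using this
    have ht : edist (MvPolynomial.eval z (P z ((2:ℝ) ^ (-(i:ℤ) - ((0:ℕ):ℤ))))) (f z)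
        ≤ ∑' j, K * E j z := by
      refine edist_le_tsum_of_edist_le_of_tendsto₀
        (f := fun j : ℕ => MvPolynomial.eval z (P z ((2:ℝ) ^ (-(i:ℤ) - (j:ℤ))))) _
        (fun j => ?_) ?_
      · have hh : (2:ℝ) ^ (-(i:ℤ) - ((j.succ : ℕ):ℤ)) = 2 ^ (-(i:ℤ) - (j:ℤ)) / 2 := by
          rw [Nat.cast_succ, ← sub_sub, zpow_sub_one₀ two_ne_zero]; ring
        have h0 : (0:ℝ) < 2 ^ (-(i:ℤ) - (j:ℤ)) := by positivity
        refine step z z _ _ h0 ?_ (closedBall_subset_closedBall ?_) (mem_closedBall_self ?_) <;>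
          rw [hh] <;> linarith
      · have := (hconv z hz).comp (tendsto_add_atTop_nat i)
        refine this.congr fun j => ?_
        simp only [Function.comp]
        congr 3
        push_cast; ring
    rw [ENNReal.tsum_mul_left] at ht
    simp only [Nat.cast_zero, sub_zero] at ht
    calc _ = edist (f z) (MvPolynomial.eval z (P a (ρ/4))) := by rw [edist_dist, Real.dist_eq]
      _ ≤ edist (f z) (MvPolynomial.eval z (P z ρ))
          + edist (MvPolynomial.eval z (P z ρ)) (MvPolynomial.eval z (P a (ρ/4))) :=
          edist_triangle _ _ _
      _ ≤ K * (∑' j, E j z) + K * (∑' j, E j z) := by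
          rw [edist_comm]
          gcongr
          exact hE0.trans (by gcongr; exact ENNReal.le_tsum 0)
      _ = _ := by ring
  -- the measure bound
  have hM : ∀ a ∈ S, (μH[d] (closedBall a (ρ/4) ∩ S))⁻¹
      ≤ ENNReal.ofReal (C₀ * 4 ^ d) * (2:ℝ≥0∞) ^ ((i:ℝ) * d) := by
    intro a ha
    have h := (hS.2.2 a ha (ρ/4) (by positivity) (by linarith)).1
    refine (ENNReal.inv_le_inv.2 h).trans ?_
    rw [← ENNReal.ofReal_inv_of_pos (by positivity)]
    have h2 : (2:ℝ≥0∞) ^ ((i:ℝ) * d) = ENNReal.ofReal ((2:ℝ) ^ ((i:ℝ) * d)) := by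
      rw [← ENNReal.ofReal_rpow_of_pos two_pos]; simp
    rw [h2, ← ENNReal.ofReal_mul (by positivity)]
    apply ENNReal.ofReal_le_ofReal
    rw [Real.div_rpow hρ0.le (by norm_num), hρ, zpow_neg, zpow_natCast, Real.inv_rpow (by positivity),
      Real.rpow_mul (by norm_num), Real.rpow_natCast]
    apply le_of_eq
    field_simp
  set G : Rn n → ℝ≥0∞ := fun z => ∑' j, E j z with hG
  have hGm : Measurable G := Measurable.tsum hEm
  -- one cube
  have hcube : ∀ Q : {Q : ℤ × (Fin n → ℤ) // Q ∈ W ∧ Q.1 = (i:ℤ) + 5},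
      (μH[d] (closedBall (aQ Q.1) (ρ/4) ∩ S))⁻¹ *
        ∫⁻ z in closedBall (aQ Q.1) (ρ/4) ∩ S,
          ENNReal.ofReal |f z - MvPolynomial.eval z (P (aQ Q.1) (ρ/4))| ^ p ∂μH[d]
      ≤ (ENNReal.ofReal (C₀ * 4 ^ d) * (2:ℝ≥0∞) ^ ((i:ℝ) * d)) *
        ∫⁻ z in closedBall (aQ Q.1) (ρ/4) ∩ S, (2 * K) ^ p * G z ^ p ∂μH[d] := by
    intro Q
    refine mul_le_mul' (hM _ (haQ _ Q.2.1).1) ?_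
    refine lintegral_mono_ae ?_
    have hl2 := ae_restrict_of_ae_restrict_of_subset
      (inter_subset_right : closedBall (aQ Q.1) (ρ/4) ∩ S ⊆ S) hLeb
    filter_upwards [hl2, ae_restrict_mem (measurableSet_closedBall.inter hS.1.measurableSet)]
      with z hz hzB
    rw [← ENNReal.mul_rpow_of_nonneg _ _ hp0.le]
    exact ENNReal.rpow_le_rpow (hpt z hz _ hzB.1) hp0.le
  have hsum : ∑' Q : {Q : ℤ × (Fin n → ℤ) // Q ∈ W ∧ Q.1 = (i:ℤ) + 5},
      ∫⁻ z in closedBall (aQ Q.1) (ρ/4) ∩ S, (2 * K) ^ p * G z ^ p ∂μH[d]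
      ≤ N * ∫⁻ z in S, (2 * K) ^ p * G z ^ p ∂μH[d] := by
    refine overlap (μH[d]) (fun Q : {Q : ℤ × (Fin n → ℤ) // Q ∈ W ∧ Q.1 = (i:ℤ) + 5} =>
      closedBall (aQ Q.1) (ρ/4)) (fun _ => measurableSet_closedBall) S _
      ((hGm.pow_const p).const_mul _) N (fun Q => Q.1.2) ?_ ?_
    · rintro ⟨⟨a, b⟩, ha⟩ ⟨⟨a', b'⟩, ha'⟩ h
      have h1 := ha.2
      have h2 := ha'.2
      simp only at h h1 h2
      subst h1 h2 h
      rfl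
    · intro z
      obtain ⟨F, hF, hm⟩ := card_near ((i:ℤ) + 5) z
      refine ⟨F, hF, fun Q hzQ => hm _ ?_⟩
      have h1 := near_center S W hW Q.1 Q.2.1
      rw [← (haQ _ Q.2.1).2, Q.2.2] at h1
      have h2 := mem_closedBall'.1 hzQ
      have h3 : ρ / 4 = 8 * 2 ^ (-((i:ℤ) + 5)) := by
        rw [← hR]; congr 2; ring
      rw [h3] at h2
      have := dist_triangle (dyadicCenter ((i:ℤ) + 5) Q.1.2) (aQ Q.1) z
      linarith
  have hmink := mink_tsum ((μH[d]).restrict S) p hp.le E hEm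
  calc _ ≤ ((ENNReal.ofReal (C₀ * 4 ^ d) * (2:ℝ≥0∞) ^ ((i:ℝ) * d)) *
        (N * ((2 * K) ^ p * ∫⁻ z in S, G z ^ p ∂μH[d]))) ^ (1/p) := by
        refine ENNReal.rpow_le_rpow ?_ (by positivity)
        refine (ENNReal.tsum_le_tsum hcube).trans ?_
        rw [ENNReal.tsum_mul_left, ← lintegral_const_mul _ (hGm.pow_const p)]
        gcongr
    _ = (ENNReal.ofReal ((C₀ * 4 ^ d * N) ^ (1/p) * (2 * (C₁ * A)))
          * (2:ℝ≥0∞) ^ ((i : ℝ) * d / p)) * (∫⁻ z in S, G z ^ p ∂μH[d]) ^ (1/p) := by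
        have hq : 0 ≤ 1/p := by positivity
        have e1 : ENNReal.ofReal ((C₀ * 4 ^ d * N) ^ (1/p) * (2 * (C₁ * A)))
            = ENNReal.ofReal (C₀ * 4 ^ d) ^ (1/p) * (N:ℝ≥0∞) ^ (1/p) * (2 * K) := by
          rw [ENNReal.ofReal_mul (by positivity), ← ENNReal.ofReal_rpow_of_nonneg (by positivity) hq,
            ENNReal.ofReal_mul (by positivity), ENNReal.ofReal_natCast,
            ENNReal.mul_rpow_of_nonneg _ _ hq, ENNReal.ofReal_mul (p := 2) (by norm_num)]
          simp [hK]
        have e2 : ((2 * K) ^ p) ^ (1/p) = 2 * K := by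
          rw [← ENNReal.rpow_mul, mul_one_div_cancel hp0.ne', ENNReal.rpow_one]
        rw [e1]
        simp only [ENNReal.mul_rpow_of_nonneg _ _ hq]
        rw [e2, ← ENNReal.rpow_mul, mul_one_div]
        ring
    _ ≤ _ := by gcongr
end
end

section
/- Let Ω be a domain (nonempty open connected set) in ℝⁿ (n ≥ 2) whose boundary ∂Ω is κ-porous, let 1 < p < ∞, 1 ≤ q < ∞ and s > 0. Then there is a constant c (depending on p, q, s, n, κ and ∂Ω) such that for every f ∈ F^s_{pq}(ℝⁿ), ‖f·χ_Ω‖_{F^s_{pq}(ℝⁿ)} ≤ c ( ‖f‖_{F^s_{pq}(ℝⁿ)} + (∫_Ω |f(y)|^p / dist(y,∂Ω)^{sp} dy)^{1/p} ), as an inequality in [0,∞], where χ_Ω is the characteristic function of Ω. -/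
open MeasureTheory Metric Set Filter
open scoped ENNReal NNReal Topology

noncomputable section

/-- `S` is `κ`-porous. -/
def IsPorous {n : ℕ} (κ : ℝ) (S : Set (Rn n)) : Prop :=
  1 ≤ κ ∧ ∀ (x : Rn n) (r : ℝ), 0 < r → r ≤ 1 →
    ∃ y ∈ closedBall x r, closedBall y (r / κ) ∩ S = ∅

/-- The Triebel–Lizorkin norm `‖f‖_{F^s_{pq}}` (with `k = [s]+1`). -/
def tlNorm {n : ℕ} (s p q : ℝ) (f : Rn n → ℝ) : ℝ≥0∞ :=
  (∫⁻ x, ENNReal.ofReal |f x| ^ p) ^ (1 / p) +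
  (∫⁻ x, ((∫⁻ t in Set.Ioo (0:ℝ) 1,
      (ENNReal.ofReal (t ^ (-s)) * localApprox (⌊s⌋₊ + 1) 1 f x t) ^ q
        * ENNReal.ofReal t⁻¹) ^ (1 / q)) ^ p) ^ (1 / p)


lemma lint_Ici {m a : ℝ} (hm : 0 < m) (ha : 0 < a) :
    ∫⁻ t in Ici m, ENNReal.ofReal (t ^ (-a - 1)) = ENNReal.ofReal (m ^ (-a) / a) := by
  rw [setLIntegral_congr Ioi_ae_eq_Ici.symm, ← ofReal_integral_eq_lintegral_ofReal]
  · rw [integral_Ioi_rpow_of_lt (by linarith) hm]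
    congr 1
    rw [show -a - 1 + 1 = -a by ring, neg_div_neg_eq]
  · exact integrableOn_Ioi_rpow_of_lt (by linarith) hm
  · filter_upwards [ae_restrict_mem measurableSet_Ioi] with t ht
    exact Real.rpow_nonneg (hm.trans ht).le _

lemma lint_Ioo {w : ℝ≥0∞} (hw : w ≠ ⊤) {a : ℝ} (ha : 0 < a) :
    ∫⁻ t in Ioi (0:ℝ), (if ENNReal.ofReal t < w then ENNReal.ofReal (t ^ (a - 1)) else 0) =
      ENNReal.ofReal (1 / a) * w ^ a := by
  lift w to ℝ≥0 using hw
  have h1 : ∀ t : ℝ, (if ENNReal.ofReal t < (w:ℝ≥0∞) then ENNReal.ofReal (t ^ (a - 1)) else 0)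
      = (Iio (w:ℝ)).indicator (fun t => ENNReal.ofReal (t ^ (a - 1))) t ∨ t ≤ 0 := by
    intro t
    by_cases ht : t ≤ 0
    · right; exact ht
    · left
      push Not at ht
      have : ENNReal.ofReal t < (w:ℝ≥0∞) ↔ t < w := by
        rw [← ENNReal.ofReal_coe_nnreal, ENNReal.ofReal_lt_ofReal_iff_of_nonneg ht.le]
      simp only [this, indicator, mem_Iio]
  have h2 : ∫⁻ t in Ioi (0:ℝ), (if ENNReal.ofReal t < (w:ℝ≥0∞) then ENNReal.ofReal (t ^ (a - 1)) else 0)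
      = ∫⁻ t in Ioi (0:ℝ), (Iio (w:ℝ)).indicator (fun t => ENNReal.ofReal (t ^ (a - 1))) t := by
    apply setLIntegral_congr_fun measurableSet_Ioi
    intro t ht
    rcases h1 t with h | h
    · exact h
    · exact absurd h (not_le.2 ht)
  rw [h2, lintegral_indicator measurableSet_Iio, Measure.restrict_restrict measurableSet_Iio,
    Iio_inter_Ioi, setLIntegral_congr Ioo_ae_eq_Ioc, ← ofReal_integral_eq_lintegral_ofReal,
    ← intervalIntegral.integral_of_le (NNReal.coe_nonneg w), integral_rpow (Or.inl (by linarith))]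
  · rw [show a - 1 + 1 = a by ring, Real.zero_rpow ha.ne', sub_zero, ← ENNReal.ofReal_coe_nnreal,
      ENNReal.ofReal_rpow_of_nonneg (NNReal.coe_nonneg w) ha.le, ← ENNReal.ofReal_mul (by positivity)]
    congr 1; ring
  · exact (intervalIntegral.intervalIntegrable_rpow' (by linarith)).1
  · filter_upwards [ae_restrict_mem measurableSet_Ioc] with t ht
    exact Real.rpow_nonneg ht.1.le _

lemma weak_cover {n : ℕ} (hn : 2 ≤ n) {G : Rn n → ℝ≥0∞} {c : ℝ} (hc : 0 < c)
    (A : Set (Rn n)) (hA : ∀ y ∈ A, ∃ ρ > 0, ENNReal.ofReal (c * ρ ^ n) < ∫⁻ x in closedBall y ρ, G x) :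
    volume A ≤ ENNReal.ofReal (10 ^ n / c) * ∫⁻ x, G x := by
  by_cases hfin : ∫⁻ x, G x = ⊤
  · rw [hfin, ENNReal.mul_top (by simp; positivity)]; exact le_top
  choose! ρ hρ hρ2 using hA
  have hbd : ∀ y ∈ A, ρ y ≤ ((∫⁻ x, G x).toReal / c) + 1 := by
    intro y hy
    have h1 : c * ρ y ^ n ≤ (∫⁻ x, G x).toReal := by
      rw [← ENNReal.ofReal_le_iff_le_toReal hfin]
      exact (hρ2 y hy).le.trans (setLIntegral_le_lintegral _ _)
    have h2 : ρ y ^ n ≤ (∫⁻ x, G x).toReal / c := by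
      rw [le_div_iff₀ hc]; linarith
    by_cases h3 : ρ y ≤ 1
    · have : 0 ≤ (∫⁻ x, G x).toReal / c := by positivity
      linarith
    · have := le_self_pow₀ (not_le.1 h3).le (show n ≠ 0 by omega)
      linarith
  obtain ⟨u, huA, hdis, hcov⟩ := Vitali.exists_disjoint_subfamily_covering_enlargement_closedBall A id ρ
    _ hbd 5 (by norm_num)
  simp only [id] at hdis hcov
  have hcount : u.Countable := by
    apply hdis.countable_of_nonempty_interior
    intro y hy
    exact ⟨y, ball_subset_interior_closedBall (mem_ball_self (hρ y (huA hy)))⟩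
  have hsub : A ⊆ ⋃ b ∈ u, closedBall b (5 * ρ b) := by
    intro y hy
    obtain ⟨b, hb, hb2⟩ := hcov y hy
    exact mem_biUnion hb (hb2 (mem_closedBall_self (hρ y hy).le))
  calc volume A ≤ volume (⋃ b ∈ u, closedBall b (5 * ρ b)) := measure_mono hsub
    _ ≤ ∑' b : u, volume (closedBall (b : Rn n) (5 * ρ b)) := measure_biUnion_le _ hcount _
    _ ≤ ∑' b : u, ENNReal.ofReal (10 ^ n / c) * ∫⁻ x in closedBall (b : Rn n) (ρ b), G x := by
        apply ENNReal.tsum_le_tsum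
        intro b
        have h0 := hρ b (huA b.2)
        rw [Real.volume_pi_closedBall _ (by positivity)]
        calc _ = ENNReal.ofReal (10 ^ n / c) * ENNReal.ofReal (c * ρ b ^ n) := by
              rw [← ENNReal.ofReal_mul (by positivity)]
              congr 1
              rw [Fintype.card_fin]
              field_simp
              rw [← mul_pow]; ring
          _ ≤ _ := by gcongr; exact (hρ2 b (huA b.2)).le
    _ = ENNReal.ofReal (10 ^ n / c) * ∫⁻ x in ⋃ b ∈ u, closedBall b (ρ b), G x := by
        rw [ENNReal.tsum_mul_left, lintegral_biUnion hcount (fun _ _ => measurableSet_closedBall) hdis]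
    _ ≤ _ := by gcongr; exact Measure.restrict_le_self

lemma tonelli_ball {n : ℕ} {φ : Rn n → ℝ≥0∞} (hφ : Measurable φ) {a : ℝ} (ha : 0 < a) (δ : ℝ)
    (x : Rn n) (hpos : ∀ y, φ y ≠ 0 → 0 < max δ (dist y x)) :
    ∫⁻ t in Ici δ, ENNReal.ofReal (t ^ (-a - 1)) * ∫⁻ y in closedBall x t, φ y =
      ∫⁻ y, ENNReal.ofReal ((max δ (dist y x)) ^ (-a) / a) * φ y := by
  have hm : Measurable (fun z : ℝ × Rn n => (if dist z.2 x ≤ z.1 then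
      ENNReal.ofReal (z.1 ^ (-a - 1)) * φ z.2 else 0)) := by
    apply Measurable.ite
    · exact measurableSet_le (by fun_prop) (by fun_prop)
    · exact (ENNReal.measurable_ofReal.comp (by fun_prop)).mul (hφ.comp measurable_snd)
    · exact measurable_const
  calc _ = ∫⁻ t in Ici δ, ∫⁻ y, (if dist y x ≤ t then ENNReal.ofReal (t ^ (-a - 1)) * φ y else 0) := by
        apply lintegral_congr
        intro t
        rw [← lintegral_const_mul _ hφ, ← lintegral_indicator measurableSet_closedBall]
        rfl
    _ = ∫⁻ y, ∫⁻ t in Ici δ, (if dist y x ≤ t then ENNReal.ofReal (t ^ (-a - 1)) * φ y else 0) :=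
        lintegral_lintegral_swap hm.aemeasurable
    _ = _ := by
        apply lintegral_congr
        intro y
        by_cases h0 : φ y = 0
        · simp [h0]
        rw [← lint_Ici (hpos y h0) ha, ← lintegral_mul_const _ (by fun_prop)]
        have : Ici (max δ (dist y x)) = Ici (dist y x) ∩ Ici δ := by
          rw [Ici_inter_Ici, max_comm]
        rw [this, ← Measure.restrict_restrict measurableSet_Ici, ← lintegral_indicator (μ := volume.restrict (Ici δ)) measurableSet_Ici]
        rfl

/-- kernel -/
noncomputable def hker (n : ℕ) (s δ r : ℝ) : ℝ≥0∞ := ENNReal.ofReal (δ ^ s * (max δ r) ^ (-(s + n)))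

lemma tstar_le {n : ℕ} {s : ℝ} (hs : 0 < s) {δ : ℝ} (hδ : 0 < δ) {G : Rn n → ℝ≥0∞}
    (hG : Measurable G) (y : Rn n) (Mb : ℝ≥0∞)
    (hM : ∀ ρ > 0, ∫⁻ x in closedBall y ρ, G x ≤ Mb * ENNReal.ofReal (ρ ^ n)) :
    ∫⁻ x, hker n s δ (dist x y) * G x ≤ ENNReal.ofReal ((s + n) / s) * Mb := by
  have hsn : 0 < s + n := by positivity
  have h1 : ∀ x, hker n s δ (dist x y) * G x = ENNReal.ofReal (δ ^ s * (s + n)) *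
      (ENNReal.ofReal ((max δ (dist x y)) ^ (-(s + n)) / (s + n)) * G x) := by
    intro x
    rw [← mul_assoc, ← ENNReal.ofReal_mul (by positivity), hker]
    congr 2
    field_simp
  simp_rw [h1]
  rw [lintegral_const_mul' _ _ ENNReal.ofReal_ne_top, ← tonelli_ball hG hsn δ y
    (fun _ _ => lt_max_of_lt_left hδ)]
  calc _ ≤ ENNReal.ofReal (δ ^ s * (s + n)) * ∫⁻ t in Ici δ, ENNReal.ofReal (t ^ (-s - 1)) * Mb := by
        refine mul_le_mul_right ?_ _
        apply setLIntegral_mono' measurableSet_Ici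
        intro t ht
        have ht0 : 0 < t := hδ.trans_le ht
        calc _ ≤ ENNReal.ofReal (t ^ (-(s + n) - 1)) * (Mb * ENNReal.ofReal (t ^ n)) := by
              gcongr; exact hM t ht0
          _ = ENNReal.ofReal (t ^ (-(s + n) - 1)) * ENNReal.ofReal (t ^ n) * Mb := by ring
          _ = _ := by
              rw [← ENNReal.ofReal_mul (by positivity), ← Real.rpow_natCast, ← Real.rpow_add ht0]
              congr 3; ring
    _ = _ := by
        rw [lintegral_mul_const _ (by fun_prop), lint_Ici hδ hs, ← mul_assoc,
          ← ENNReal.ofReal_mul (by positivity)]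
        congr 2
        rw [Real.rpow_neg hδ.le]
        field_simp

lemma ker_meas {n : ℕ} {s : ℝ} {δ : Rn n → ℝ} (hδ : Measurable δ) :
    Measurable (fun z : Rn n × Rn n => hker n s (δ z.2) (dist z.1 z.2)) := by
  unfold hker
  fun_prop

lemma strong_type {n : ℕ} (hn : 2 ≤ n) {s : ℝ} (hs : 0 < s) {r : ℝ} (hr : 1 < r) :
    ∃ C : ℝ, ∀ (δ : Rn n → ℝ), Measurable δ → (∀ y, 0 < δ y) →
    ∀ (G : Rn n → ℝ≥0∞), Measurable G → ∀ B : ℝ≥0∞, B ≠ ⊤ → (∀ x, G x ≤ B) →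
    ∫⁻ y, (∫⁻ x, hker n s (δ y) (dist x y) * G x) ^ r ≤ ENNReal.ofReal C * ∫⁻ x, G x ^ r := by
  set c0 : ℝ := (s + n) / s with hc0
  have hc0p : 0 < c0 := by positivity
  set C1 : ℝ := 10 ^ n * (2 * c0)
  set C2 : ℝ := c0 * 2 ^ (n + 1) with hC2
  have hC1p : 0 < C1 := by positivity
  have hC2p : 0 < C2 := by positivity
  have hr1 : 0 < r - 1 := by linarith
  refine ⟨r * (C1 * (1 / (r - 1) * C2 ^ (r - 1))), ?_⟩
  intro δ hδ hδp G hG B hB hGB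
  have hW : Measurable (fun y => ∫⁻ x, hker n s (δ y) (dist x y) * G x) :=
    ((ker_meas hδ).mul (hG.comp measurable_fst)).lintegral_prod_left'
  have hball : ∀ (y : Rn n) (ρ : ℝ), 0 < ρ → volume (closedBall y ρ) = ENNReal.ofReal ((2 * ρ) ^ n) := by
    intro y ρ hρ
    rw [Real.volume_pi_closedBall _ hρ.le, Fintype.card_fin]
  have hWfin : ∀ y, (∫⁻ x, hker n s (δ y) (dist x y) * G x) ≠ ⊤ := by
    intro y
    refine ne_top_of_le_ne_top ?_ (tstar_le hs (hδp y) hG y (B * ENNReal.ofReal (2 ^ n)) ?_)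
    · exact ENNReal.mul_ne_top ENNReal.ofReal_ne_top (ENNReal.mul_ne_top hB ENNReal.ofReal_ne_top)
    · intro ρ hρ
      calc _ ≤ ∫⁻ x in closedBall y ρ, B := lintegral_mono (fun x => hGB x)
        _ = _ := by
          rw [setLIntegral_const, hball _ _ hρ, mul_pow, ENNReal.ofReal_mul (by positivity), mul_assoc]
  set W := (fun y => ∫⁻ x, hker n s (δ y) (dist x y) * G x) with hWdef
  have hlevel : ∀ l : ℝ, 0 < l → volume {y | ENNReal.ofReal l < W y} ≤
      ENNReal.ofReal (C1 / l) * ∫⁻ x, (if ENNReal.ofReal l < ENNReal.ofReal C2 * G x then G x else 0) := by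
    intro l hl
    have hms : MeasurableSet {x | ENNReal.ofReal l < ENNReal.ofReal C2 * G x} :=
      measurableSet_lt measurable_const (hG.const_mul _)
    have hG1 : Measurable (fun x => if ENNReal.ofReal l < ENNReal.ofReal C2 * G x then G x else 0) :=
      Measurable.ite hms hG measurable_const
    have := weak_cover hn (G := fun x => if ENNReal.ofReal l < ENNReal.ofReal C2 * G x then G x else 0) (c := l / (2 * c0)) (by positivity) {y | ENNReal.ofReal l < W y} ?_
    · refine this.trans_eq ?_
      congr 2
      simp only [C1]; field_simp
    intro y hy
    by_contra hcon
    push Not at hcon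
    refine absurd (tstar_le hs (hδp y) hG y (ENNReal.ofReal (l / c0)) ?_) ?_
    · intro ρ hρ
      calc _ ≤ ∫⁻ x in closedBall y ρ, ((if ENNReal.ofReal l < ENNReal.ofReal C2 * G x then G x else 0)
            + ENNReal.ofReal (l / C2)) := by
            apply lintegral_mono
            intro x
            dsimp only
            split_ifs with h
            · exact le_self_add
            · rw [zero_add, ENNReal.ofReal_div_of_pos hC2p, ENNReal.le_div_iff_mul_le (by simp [hC2p]) (by simp),
                mul_comm]
              exact not_lt.1 h
        _ ≤ ENNReal.ofReal (l / (2 * c0) * ρ ^ n) + ENNReal.ofReal (l / C2) * ENNReal.ofReal ((2 * ρ) ^ n) := by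
            rw [lintegral_add_right _ measurable_const, setLIntegral_const, hball _ _ hρ]
            gcongr
            exact hcon ρ hρ
        _ = _ := by
            rw [← ENNReal.ofReal_mul (by positivity), ← ENNReal.ofReal_mul (by positivity),
              ← ENNReal.ofReal_add (by positivity) (by positivity)]
            congr 1
            rw [hC2, mul_pow, pow_succ]
            field_simp
            norm_num
    · rw [← ENNReal.ofReal_mul hc0p.le, mul_div_cancel₀ _ hc0p.ne', not_le]
      exact hy
  have hm1 : Measurable (fun z : Rn n × ℝ => if ENNReal.ofReal z.2 < W z.1 then
      ENNReal.ofReal (z.2 ^ (r - 1)) else 0) := by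
    apply Measurable.ite _ (by fun_prop) measurable_const
    exact measurableSet_lt (by fun_prop) (hW.comp measurable_fst)
  have hm2 : Measurable (fun z : ℝ × Rn n => if ENNReal.ofReal z.1 < ENNReal.ofReal C2 * G z.2 then
      ENNReal.ofReal (z.1 ^ (r - 1 - 1)) * G z.2 else 0) := by
    apply Measurable.ite _ _ measurable_const
    · exact measurableSet_lt (by fun_prop) ((hG.comp measurable_snd).const_mul _)
    · exact Measurable.mul (by fun_prop) (hG.comp measurable_snd)
  calc ∫⁻ y, W y ^ r = ∫⁻ y, ENNReal.ofReal r * ∫⁻ l in Ioi (0:ℝ), (if ENNReal.ofReal l < W y then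
        ENNReal.ofReal (l ^ (r - 1)) else 0) := by
        apply lintegral_congr
        intro y
        rw [lint_Ioo (hWfin y) (by linarith), ← mul_assoc, ← ENNReal.ofReal_mul (by linarith),
          mul_one_div_cancel (by linarith), ENNReal.ofReal_one, one_mul]
    _ = ENNReal.ofReal r * ∫⁻ l in Ioi (0:ℝ), ∫⁻ y, (if ENNReal.ofReal l < W y then
        ENNReal.ofReal (l ^ (r - 1)) else 0) := by
        rw [lintegral_const_mul' _ _ ENNReal.ofReal_ne_top, lintegral_lintegral_swap hm1.aemeasurable]
    _ ≤ ENNReal.ofReal r * ∫⁻ l in Ioi (0:ℝ), ENNReal.ofReal C1 * ∫⁻ x, (if ENNReal.ofReal l < ENNReal.ofReal C2 * G x then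
      ENNReal.ofReal (l ^ (r - 1 - 1)) * G x else 0) := by
        refine mul_le_mul_right ?_ _
        apply setLIntegral_mono' measurableSet_Ioi
        intro l (hl : 0 < l)
        have e1 : ∫⁻ y, (if ENNReal.ofReal l < W y then ENNReal.ofReal (l ^ (r - 1)) else 0) =
            ENNReal.ofReal (l ^ (r - 1)) * volume {y | ENNReal.ofReal l < W y} := by
          rw [← lintegral_indicator_const (measurableSet_lt measurable_const hW)]
          simp only [indicator, mem_ofPred_eq]
        have e2 : ∫⁻ x, (if ENNReal.ofReal l < ENNReal.ofReal C2 * G x then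
            ENNReal.ofReal (l ^ (r - 1 - 1)) * G x else 0) = ENNReal.ofReal (l ^ (r - 1 - 1)) *
            ∫⁻ x, (if ENNReal.ofReal l < ENNReal.ofReal C2 * G x then G x else 0) := by
          rw [← lintegral_const_mul' _ _ ENNReal.ofReal_ne_top]
          congr 1; ext x
          split_ifs <;> simp
        rw [e1, e2]
        calc _ ≤ _ := mul_le_mul_right (hlevel l hl) _
          _ = _ := by
            rw [← mul_assoc, ← mul_assoc, ← ENNReal.ofReal_mul (by positivity), ← ENNReal.ofReal_mul (by positivity)]
            congr 2
            rw [Real.rpow_sub_one hl.ne' (r - 1)]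
            ring
    _ = ENNReal.ofReal r * (ENNReal.ofReal C1 * ∫⁻ x, ∫⁻ l in Ioi (0:ℝ), (if ENNReal.ofReal l < ENNReal.ofReal C2 * G x then
      ENNReal.ofReal (l ^ (r - 1 - 1)) * G x else 0)) := by
        rw [lintegral_const_mul' _ _ ENNReal.ofReal_ne_top, lintegral_lintegral_swap hm2.aemeasurable]
    _ = ENNReal.ofReal r * (ENNReal.ofReal C1 * ∫⁻ x, ENNReal.ofReal (1 / (r - 1) * C2 ^ (r - 1)) * G x ^ r) := by
        congr 2
        apply lintegral_congr
        intro x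
        have hGx : G x ≠ ⊤ := ne_top_of_le_ne_top hB (hGB x)
        have : ∀ l : ℝ, (if ENNReal.ofReal l < ENNReal.ofReal C2 * G x then
            ENNReal.ofReal (l ^ (r - 1 - 1)) * G x else 0) = (if ENNReal.ofReal l < ENNReal.ofReal C2 * G x then
            ENNReal.ofReal (l ^ (r - 1 - 1)) else 0) * G x := by
          intro l; split_ifs <;> simp
        simp_rw [this]
        rw [lintegral_mul_const' _ _ hGx, lint_Ioo (ENNReal.mul_ne_top ENNReal.ofReal_ne_top hGx) hr1,
          ENNReal.mul_rpow_of_nonneg _ _ hr1.le, ENNReal.ofReal_rpow_of_pos hC2p, ENNReal.ofReal_mul (by positivity)]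
        have : G x ^ r = G x ^ (r - 1) * G x := by
          conv_rhs => rw [← ENNReal.rpow_one (G x), ← ENNReal.rpow_mul]
          rw [← ENNReal.rpow_add_of_nonneg _ _ (by linarith) (by norm_num)]
          congr 1; ring
        rw [this]; ring
    _ = _ := by
        rw [lintegral_const_mul' _ _ ENNReal.ofReal_ne_top, ENNReal.ofReal_mul (p := r) (by linarith),
          ENNReal.ofReal_mul (p := C1) (by positivity)]
        ring

lemma dual_bound {n : ℕ} (hn : 2 ≤ n) {s : ℝ} (hs : 0 < s) {p : ℝ} (hp : 1 < p) :
    ∃ C : ℝ, ∀ (δ : Rn n → ℝ), Measurable δ → (∀ y, 0 < δ y) →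
    ∀ (h : Rn n → ℝ≥0∞), Measurable h →
    (∫⁻ x, (∫⁻ y, hker n s (δ y) (dist x y) * h y) ^ p) ^ (1 / p) ≤
      ENNReal.ofReal C * (∫⁻ y, h y ^ p) ^ (1 / p) := by
  have hp0 : 0 < p := by linarith
  have hpq : p.HolderConjugate (p.conjExponent) := Real.HolderConjugate.conjExponent hp
  set r := p.conjExponent
  obtain ⟨C, hC⟩ := strong_type hn hs hpq.symm.lt
  have hr0 : 0 < r := hpq.symm.pos
  refine ⟨(max C 0) ^ (1 / r), ?_⟩
  intro δ hδ hδp h hh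
  set V : Rn n → ℝ≥0∞ := fun x => ∫⁻ y, hker n s (δ y) (dist x y) * h y with hVdef
  have hV : Measurable V :=
    ((ker_meas hδ).mul (hh.comp measurable_snd)).lintegral_prod_right'
  set F : ℕ → Rn n → ℝ≥0∞ := fun N => (closedBall 0 (N:ℝ)).indicator (fun x => min (V x) N) with hF
  have hFm : ∀ N, Measurable (F N) := fun N =>
    (hV.min measurable_const).indicator measurableSet_closedBall
  have hFN : ∀ N x, F N x ≤ N := by
    intro N x
    simp only [hF, indicator]
    split_ifs <;> simp
  have hFV : ∀ N x, F N x ≤ V x := by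
    intro N x
    simp only [hF, indicator]
    split_ifs <;> simp
  have hmono : Monotone F := by
    intro N M hNM x
    have : (N:ℝ≥0∞) ≤ M := by exact_mod_cast hNM
    have h3 : closedBall (0:Rn n) N ⊆ closedBall 0 M := closedBall_subset_closedBall (by exact_mod_cast hNM)
    simp only [hF, indicator]
    split_ifs with h1 h2
    · exact min_le_min_left _ this
    · exact absurd (h3 h1) h2
    · simp
    · simp
  have hsup : ∀ x, ⨆ N, F N x ^ p = V x ^ p := by
    intro x
    apply le_antisymm
    · exact iSup_le fun N => ENNReal.rpow_le_rpow (hFV N x) hp0.le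
    · apply le_of_forall_lt
      intro b hb
      rw [lt_iSup_iff]
      have hb2 : b ^ (1 / p) < V x := by
        rwa [one_div, ENNReal.rpow_inv_lt_iff hp0]
      obtain ⟨N1, hN1⟩ := ENNReal.exists_nat_gt (r := b ^ (1/p)) (ne_top_of_lt hb2)
      obtain ⟨N2, hN2⟩ := exists_nat_ge ‖x‖
      refine ⟨max N1 N2, ?_⟩
      rw [← ENNReal.rpow_inv_lt_iff hp0, ← one_div]
      have hx : x ∈ closedBall (0:Rn n) ((max N1 N2 : ℕ):ℝ) := by
        rw [mem_closedBall_zero_iff]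
        refine hN2.trans ?_
        exact_mod_cast le_max_right _ _
      simp only [hF, indicator, hx, if_true]
      refine lt_min hb2 (hN1.trans_le ?_)
      exact_mod_cast le_max_left _ _
  have key : ∀ N, ∫⁻ x, F N x ^ p ≤ (ENNReal.ofReal ((max C 0) ^ (1 / r)) * (∫⁻ y, h y ^ p) ^ (1 / p)) ^ p := by
    intro N
    set X := ∫⁻ x, F N x ^ p with hX
    have hXfin : X ≠ ⊤ := by
      have : X ≤ ∫⁻ x in closedBall (0:Rn n) N, (N:ℝ≥0∞) ^ p := by
        rw [← lintegral_indicator measurableSet_closedBall]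
        apply lintegral_mono
        intro x
        simp only [hF, indicator]
        split_ifs
        · exact ENNReal.rpow_le_rpow (min_le_right _ _) hp0.le
        · simp [hp0]
      refine ne_top_of_le_ne_top ?_ this
      rw [setLIntegral_const]
      exact ENNReal.mul_ne_top (ENNReal.rpow_ne_top_of_nonneg hp0.le (ENNReal.natCast_ne_top N))
        (measure_closedBall_lt_top).ne
    set G : Rn n → ℝ≥0∞ := fun x => F N x ^ (p - 1) with hG
    have hGm : Measurable G := (hFm N).pow_const _
    have hGr : ∀ x, G x ^ r = F N x ^ p := by
      intro x
      rw [hG, ← ENNReal.rpow_mul]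
      congr 1
      exact hpq.sub_one_mul_conj
    have hst := hC δ hδ hδp G hGm ((N:ℝ≥0∞) ^ (p - 1))
      (ENNReal.rpow_ne_top_of_nonneg (by linarith) (ENNReal.natCast_ne_top N))
      (fun x => ENNReal.rpow_le_rpow (hFN N x) (by linarith))
    simp_rw [hGr] at hst
    have hm : Measurable (fun z : Rn n × Rn n => hker n s (δ z.2) (dist z.1 z.2) * h z.2 * G z.1) :=
      ((ker_meas hδ).mul (hh.comp measurable_snd)).mul (hGm.comp measurable_fst)
    have hWm : Measurable (fun y => ∫⁻ x, hker n s (δ y) (dist x y) * G x) :=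
      ((ker_meas hδ).mul (hGm.comp measurable_fst)).lintegral_prod_left'
    have hXle : X ≤ ENNReal.ofReal ((max C 0) ^ (1 / r)) * (∫⁻ y, h y ^ p) ^ (1 / p) * X ^ (1 / r) := by
      calc X ≤ ∫⁻ x, V x * G x := by
            apply lintegral_mono
            intro x
            calc F N x ^ p = F N x * F N x ^ (p - 1) := by
                  conv_rhs => enter [1]; rw [← ENNReal.rpow_one (F N x)]
                  rw [← ENNReal.rpow_add_of_nonneg _ _ (by norm_num) (by linarith)]
                  congr 1; ring
              _ ≤ _ := mul_le_mul_left (hFV N x) _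
        _ = ∫⁻ x, ∫⁻ y, hker n s (δ y) (dist x y) * h y * G x := by
            apply lintegral_congr
            intro x
            rw [lintegral_mul_const]
            exact ((ker_meas hδ).mul (hh.comp measurable_snd)).comp measurable_prodMk_left
        _ = ∫⁻ y, ∫⁻ x, hker n s (δ y) (dist x y) * h y * G x := lintegral_lintegral_swap hm.aemeasurable
        _ = ∫⁻ y, h y * ∫⁻ x, hker n s (δ y) (dist x y) * G x := by
            apply lintegral_congr
            intro y
            rw [← lintegral_const_mul]
            · apply lintegral_congr
              intro x; ring
            · exact ((ker_meas hδ).mul (hGm.comp measurable_fst)).comp measurable_prodMk_right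
        _ ≤ (∫⁻ y, h y ^ p) ^ (1 / p) * (∫⁻ y, (∫⁻ x, hker n s (δ y) (dist x y) * G x) ^ r) ^ (1 / r) :=
            ENNReal.lintegral_mul_le_Lp_mul_Lq volume hpq hh.aemeasurable hWm.aemeasurable
        _ ≤ (∫⁻ y, h y ^ p) ^ (1 / p) * (ENNReal.ofReal (max C 0) * X) ^ (1 / r) := by
            gcongr
            refine hst.trans ?_
            gcongr
            exact le_max_left _ _
        _ = _ := by
            rw [ENNReal.mul_rpow_of_nonneg _ _ (by positivity),
              ENNReal.ofReal_rpow_of_nonneg (le_max_right _ _) (by positivity)]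
            ring
    by_cases hX0 : X = 0
    · rw [hX0]; exact zero_le
    set Y := ENNReal.ofReal ((max C 0) ^ (1 / r)) * (∫⁻ y, h y ^ p) ^ (1 / p)
    have hsplit : X = X ^ (1 / p) * X ^ (1 / r) := by
      rw [← ENNReal.rpow_add _ _ hX0 hXfin]
      have : 1 / p + 1 / r = 1 := by simpa using hpq.inv_add_inv_eq_one
      rw [this, ENNReal.rpow_one]
    have hle : X ^ (1 / p) ≤ Y := by
      have h1 : X ^ (1 / r) ≠ 0 := by
        simp [ENNReal.rpow_eq_zero_iff, hX0, hXfin]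
      have h2 : X ^ (1 / r) ≠ ⊤ := ENNReal.rpow_ne_top_of_nonneg (by positivity) hXfin
      rw [← ENNReal.mul_le_mul_iff_left h1 h2]
      rw [← hsplit]; exact hXle
    rw [one_div, ENNReal.rpow_inv_le_iff hp0] at hle
    exact hle
  rw [one_div, ENNReal.rpow_inv_le_iff hp0, ← one_div]
  change ∫⁻ x, V x ^ p ≤ _
  rw [lintegral_congr (fun x => (hsup x).symm), lintegral_iSup (fun N => (hFm N).pow_const _)]
  · exact iSup_le key
  · intro N M hNM x
    exact ENNReal.rpow_le_rpow (hmono hNM x) hp0.le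

lemma local_near {n : ℕ} {Ω : Set (Rn n)} (hΩo : IsOpen Ω) (k : ℕ) (f : Rn n → ℝ)
    {x : Rn n} {t : ℝ} (ht : t < infDist x (frontier Ω)) :
    localApprox k 1 (Ω.indicator f) x t ≤ localApprox k 1 f x t := by
  have hdisj : ¬ (closedBall x t ∩ frontier Ω).Nonempty := by
    rintro ⟨z, hz, hz2⟩
    have h1 := infDist_le_dist_of_mem (x := x) hz2
    rw [mem_closedBall, dist_comm] at hz
    linarith
  have hpre : IsPreconnected (closedBall x t) := (convex_closedBall x t).isPreconnected
  by_cases h1 : (closedBall x t ∩ Ω).Nonempty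
  · have h2 : closedBall x t ⊆ Ω := by
      by_contra h2
      rw [not_subset] at h2
      obtain ⟨z, hz, hz2⟩ := h2
      have hcl : ∀ w ∈ closedBall x t, w ∉ Ω → w ∈ (closure Ω)ᶜ := by
        intro w hw hwΩ hwc
        refine hdisj ⟨w, hw, ?_⟩
        rw [hΩo.frontier_eq]
        exact ⟨hwc, hwΩ⟩
      obtain ⟨w, _, hw1, hw2⟩ := hpre Ω (closure Ω)ᶜ hΩo isClosed_closure.isOpen_compl
        (fun w hw => by
          by_cases h : w ∈ Ω
          · exact Or.inl h
          · exact Or.inr (hcl w hw h)) h1 ⟨z, hz, hcl z hz hz2⟩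
      exact hw2 (subset_closure hw1)
    unfold localApprox
    refine iInf_mono fun P => iInf_mono fun _ => le_of_eq ?_
    congr 2
    apply setLIntegral_congr_fun measurableSet_closedBall
    intro y hy
    simp [indicator_of_mem (h2 hy)]
  · have hz : localApprox k 1 (Ω.indicator f) x t ≤ 0 := by
      unfold localApprox
      refine (iInf₂_le (0 : MvPolynomial (Fin n) ℝ) (by simp)).trans ?_
      have : ∫⁻ y in closedBall x t, ENNReal.ofReal |Ω.indicator f y - MvPolynomial.eval y 0| ^ (1:ℝ)
          = ∫⁻ y in closedBall x t, 0 := by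
        apply setLIntegral_congr_fun measurableSet_closedBall
        intro y hy
        have : y ∉ Ω := fun h => h1 ⟨y, hy, h⟩
        simp [indicator_of_notMem this]
      rw [this]; simp
    exact hz.trans zero_le

lemma local_far {n : ℕ} (s : ℝ) (k : ℕ) (g : Rn n → ℝ) (x : Rn n) {t : ℝ} (ht : 0 < t) :
    ENNReal.ofReal (t ^ (-s)) * localApprox k 1 g x t ≤
      ENNReal.ofReal (t ^ (-(s + n))) * ∫⁻ y in closedBall x t, ENNReal.ofReal |g y| := by
  have h1 : localApprox k 1 g x t ≤ ENNReal.ofReal (t ^ (-(n:ℝ))) * ∫⁻ y in closedBall x t, ENNReal.ofReal |g y| := by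
    unfold localApprox
    refine (iInf₂_le (0 : MvPolynomial (Fin n) ℝ) (by simp)).trans ?_
    simp only [map_zero, sub_zero, ENNReal.rpow_one, div_one]
    gcongr
    rw [Real.volume_pi_closedBall _ ht.le, Fintype.card_fin, ← ENNReal.ofReal_inv_of_pos (by positivity)]
    apply ENNReal.ofReal_le_ofReal
    rw [Real.rpow_neg ht.le, Real.rpow_natCast]
    gcongr
    linarith
  calc _ ≤ _ := mul_le_mul_right h1 _
    _ = _ := by
      rw [← mul_assoc, ← ENNReal.ofReal_mul (by positivity), ← Real.rpow_add ht]
      congr 3; ring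

lemma inner_bound {n : ℕ} (hn : 2 ≤ n) {Ω : Set (Rn n)} (hΩo : IsOpen Ω) (hne : (frontier Ω).Nonempty)
    {q s : ℝ} (hq : 1 ≤ q) (hs : 0 < s) (k : ℕ) {f : Rn n → ℝ} (hf : Measurable f) (x : Rn n) (U : ℝ≥0∞)
    (hU : U = ∫⁻ y, ENNReal.ofReal ((max (infDist x (frontier Ω)) (dist y x)) ^ (-(s + n))) *
      ENNReal.ofReal |Ω.indicator f y|) :
    ∫⁻ t in Set.Ioo (0:ℝ) 1, (ENNReal.ofReal (t ^ (-s)) * localApprox k 1 (Ω.indicator f) x t) ^ q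
        * ENNReal.ofReal t⁻¹ ≤
    (∫⁻ t in Set.Ioo (0:ℝ) 1, (ENNReal.ofReal (t ^ (-s)) * localApprox k 1 f x t) ^ q
        * ENNReal.ofReal t⁻¹) + U ^ q := by
  set d := infDist x (frontier Ω) with hd
  set φ : Rn n → ℝ≥0∞ := fun y => ENNReal.ofReal |Ω.indicator f y| with hφ
  have hφm : Measurable φ := by
    have := hf.indicator hΩo.measurableSet
    fun_prop
  have hsn : 1 ≤ s + n := by
    have : (2:ℝ) ≤ n := by exact_mod_cast hn
    linarith
  have hpos : ∀ y, φ y ≠ 0 → 0 < max d (dist y x) := by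
    intro y hy
    by_contra hcon
    rw [not_lt, max_le_iff] at hcon
    have hyx : y = x := dist_le_zero.1 hcon.2
    have hyΩ : y ∈ Ω := by
      by_contra h
      simp [hφ, indicator_of_notMem h] at hy
    subst hyx
    have : y ∈ frontier Ω := by
      rw [isClosed_frontier.mem_iff_infDist_zero hne]
      exact le_antisymm hcon.1 infDist_nonneg
    exact (hΩo.inter_frontier_eq.subset ⟨hyΩ, this⟩ : y ∈ (∅ : Set _))
  have hd0 : 0 ≤ d := infDist_nonneg
  set b : ℝ → ℝ≥0∞ := fun t => ∫⁻ y in closedBall x t, φ y with hb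
  have hbm : Measurable b := by
    apply Monotone.measurable
    intro t t' htt
    exact lintegral_mono_set (closedBall_subset_closedBall htt)
  have hbU : ∀ t, 0 < t → d ≤ t → ENNReal.ofReal (t ^ (-(s + n))) * b t ≤ U := by
    intro t ht hdt
    rw [hb, ← lintegral_const_mul _ hφm, hU]
    refine le_trans ?_ (setLIntegral_le_lintegral (closedBall x t) _)
    apply setLIntegral_mono' measurableSet_closedBall
    intro y hy
    by_cases h0 : φ y = 0
    · rw [h0]; simp
    refine mul_le_mul_left ?_ _
    apply ENNReal.ofReal_le_ofReal
    exact Real.rpow_le_rpow_of_nonpos (hpos y h0) (max_le hdt hy) (by linarith)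
  have hint : ∫⁻ t in Ici d, ENNReal.ofReal (t ^ (-(s + n) - 1)) * b t ≤ U := by
    rw [hb, tonelli_ball hφm (by linarith) d x hpos, hU]
    apply lintegral_mono
    intro y
    refine mul_le_mul_left ?_ _
    apply ENNReal.ofReal_le_ofReal
    exact div_le_self (Real.rpow_nonneg (le_max_of_le_left hd0) _) hsn
  have hm : Measurable ((Ici d).indicator (fun t => U ^ (q - 1) * (ENNReal.ofReal (t ^ (-(s + n) - 1)) * b t))) := by
    apply Measurable.indicator _ measurableSet_Ici
    fun_prop
  have hqs : ∀ w : ℝ≥0∞, w ^ q = w ^ (q - 1) * w := by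
    intro w
    conv_rhs => enter [2]; rw [← ENNReal.rpow_one w]
    rw [← ENNReal.rpow_add_of_nonneg _ _ (by linarith) (by norm_num)]
    congr 1; ring
  calc _ ≤ ∫⁻ t in Set.Ioo (0:ℝ) 1, ((ENNReal.ofReal (t ^ (-s)) * localApprox k 1 f x t) ^ q
        * ENNReal.ofReal t⁻¹ + (Ici d).indicator
          (fun t => U ^ (q - 1) * (ENNReal.ofReal (t ^ (-(s + n) - 1)) * b t)) t) := by
        apply setLIntegral_mono' measurableSet_Ioo
        intro t ht
        by_cases hdt : d ≤ t
        · refine le_trans ?_ le_add_self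
          rw [indicator_of_mem (show t ∈ Ici d from hdt)]
          have h1 := local_far s k (Ω.indicator f) x ht.1
          calc _ ≤ (ENNReal.ofReal (t ^ (-(s + n))) * b t) ^ q * ENNReal.ofReal t⁻¹ := by
                gcongr
            _ ≤ (U ^ (q - 1) * (ENNReal.ofReal (t ^ (-(s + n))) * b t)) * ENNReal.ofReal t⁻¹ := by
                rw [hqs]
                gcongr
                exact hbU t ht.1 hdt
            _ = U ^ (q - 1) * ((ENNReal.ofReal (t ^ (-(s + n))) * ENNReal.ofReal t⁻¹) * b t) := by ring
            _ = _ := by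
                rw [← ENNReal.ofReal_mul (Real.rpow_nonneg ht.1.le _), ← Real.rpow_neg_one t, ← Real.rpow_add ht.1]
                rfl
        · refine le_trans ?_ le_self_add
          gcongr
          exact local_near hΩo k f (not_le.1 hdt)
    _ = _ := lintegral_add_right _ hm
    _ ≤ _ := by
        gcongr
        refine (lintegral_mono' Measure.restrict_le_self le_rfl).trans ?_
        rw [lintegral_indicator measurableSet_Ici, lintegral_const_mul _ (by fun_prop), hqs U]
        gcongr

theorem zero_extension_hardy {n : ℕ} (hn : 2 ≤ n) (Ω : Set (Rn n))
    (hΩo : IsOpen Ω) (hΩc : IsConnected Ω) (κ : ℝ) (hpor : IsPorous κ (frontier Ω))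
    (p q s : ℝ) (hp : 1 < p) (hq : 1 ≤ q) (hs : 0 < s) :
    ∃ c > 0, ∀ f : Rn n → ℝ, Measurable f → tlNorm s p q f < ⊤ →
      tlNorm s p q (Ω.indicator f) ≤ ENNReal.ofReal c *
        (tlNorm s p q f +
          (∫⁻ y in Ω,
            ENNReal.ofReal (|f y| ^ p / infDist y (frontier Ω) ^ (s * p))) ^ (1/p)) := by
  by_cases hne : (frontier Ω).Nonempty
  swap
  · rw [not_nonempty_iff_eq_empty, ← isClopen_iff_frontier_eq_empty] at hne
    have : Ω = univ := hne.eq_univ hΩc.nonempty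
    subst this
    refine ⟨1, one_pos, fun f _ _ => ?_⟩
    simp
  have hp0 : 0 < p := by linarith
  have hq0 : 0 < q := by linarith
  obtain ⟨C0, hC0⟩ := dual_bound hn hs hp
  set D : ℝ≥0∞ := ((2:ℝ≥0∞) ^ (p - 1)) ^ (1 / p) with hD
  set K : ℝ≥0∞ := ENNReal.ofReal (2 ^ (s + n)) with hK
  set E : ℝ≥0∞ := 1 + D + D * K * ENNReal.ofReal C0 with hE
  have hDt : D ≠ ⊤ := by
    apply ENNReal.rpow_ne_top_of_nonneg (by positivity)
    exact ENNReal.rpow_ne_top_of_nonneg (by linarith) (by simp)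
  have hEt : E ≠ ⊤ := by
    simp only [hE, hK]
    finiteness
  have hE1 : 1 ≤ E := by
    rw [hE, add_assoc]; exact le_self_add
  refine ⟨E.toReal, ENNReal.toReal_pos (by positivity) hEt, fun f hf _ => ?_⟩
  rw [ENNReal.ofReal_toReal hEt]
  classical
  set d : Rn n → ℝ := fun y => infDist y (frontier Ω) with hd
  set δ : Rn n → ℝ := fun y => if y ∈ Ω then d y else 1 with hδ
  have hdpos : ∀ y ∈ Ω, 0 < d y := by
    intro y hy
    refine (isClosed_frontier.notMem_iff_infDist_pos hne).1 fun h => ?_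
    exact (hΩo.inter_frontier_eq.subset ⟨hy, h⟩ : y ∈ (∅ : Set _))
  have hdm : Measurable d := measurable_infDist
  have hδm : Measurable δ := Measurable.ite hΩo.measurableSet hdm measurable_const
  have hδp : ∀ y, 0 < δ y := by
    intro y
    simp only [hδ]
    split_ifs with h
    · exact hdpos y h
    · exact one_pos
  set h : Rn n → ℝ≥0∞ := Ω.indicator (fun y => ENNReal.ofReal (|f y| / d y ^ s)) with hh
  have hhm : Measurable h := by
    apply Measurable.indicator _ hΩo.measurableSet
    fun_prop
  have hHeq : ∫⁻ y, h y ^ p = ∫⁻ y in Ω, ENNReal.ofReal (|f y| ^ p / infDist y (frontier Ω) ^ (s * p)) := by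
    rw [← lintegral_indicator hΩo.measurableSet]
    apply lintegral_congr
    intro y
    by_cases hy : y ∈ Ω
    · have := hdpos y hy
      rw [hh, indicator_of_mem hy, indicator_of_mem hy, ENNReal.ofReal_rpow_of_nonneg (by positivity) hp0.le,
        Real.div_rpow (by positivity) (by positivity), ← Real.rpow_mul this.le]
    · rw [hh, indicator_of_notMem hy, indicator_of_notMem hy, ENNReal.zero_rpow_of_pos hp0]
  set V : Rn n → ℝ≥0∞ := fun x => ∫⁻ y, hker n s (δ y) (dist x y) * h y with hV
  have hVm : Measurable V :=
    ((ker_meas hδm).mul (hhm.comp measurable_snd)).lintegral_prod_right'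
  have hVb := hC0 δ hδm hδp h hhm
  rw [hHeq] at hVb
  have hUV : ∀ x, ∫⁻ y, ENNReal.ofReal ((max (infDist x (frontier Ω)) (dist y x)) ^ (-(s + n))) *
      ENNReal.ofReal |Ω.indicator f y| ≤ K * V x := by
    intro x
    rw [hV, ← lintegral_const_mul' _ _ (by simp [hK])]
    apply lintegral_mono
    intro y
    dsimp only
    by_cases hy : y ∈ Ω
    · have hdy := hdpos y hy
      have htri : d y ≤ d x + dist y x := infDist_le_infDist_add_dist
      have hdx : 0 ≤ d x := infDist_nonneg
      have hdist : 0 ≤ dist y x := dist_nonneg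
      have hmm : max (d y) (dist x y) ≤ 2 * max (d x) (dist y x) := by
        have h1 := le_max_left (d x) (dist y x)
        have h2 := le_max_right (d x) (dist y x)
        rw [dist_comm x y]
        apply max_le <;> linarith
      have hm0 : 0 < max (d y) (dist x y) := lt_max_of_lt_left hdy
      have hm1 : 0 < max (d x) (dist y x) := by linarith
      rw [hker, hh, indicator_of_mem hy, indicator_of_mem hy, hK, ← ENNReal.ofReal_mul (by positivity),
        ← ENNReal.ofReal_mul (by have := hδp y; positivity), ← ENNReal.ofReal_mul (by positivity)]
      apply ENNReal.ofReal_le_ofReal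
      have hδy : δ y = d y := by simp only [hδ, hy, if_true]
      rw [hδy]
      have hk : (max (d x) (dist y x)) ^ (-(s + n)) ≤ 2 ^ (s + n) * (max (d y) (dist x y)) ^ (-(s + n)) := by
        have h3 := Real.rpow_le_rpow_of_nonpos hm0 hmm (show -(s + (n:ℝ)) ≤ 0 by
          have : (0:ℝ) ≤ n := by positivity
          linarith)
        rw [Real.mul_rpow (by norm_num) hm1.le, Real.rpow_neg (by norm_num : (0:ℝ) ≤ 2)] at h3
        have h4 : (0:ℝ) < 2 ^ (s + n) := by positivity
        rwa [inv_mul_le_iff₀ h4] at h3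
      calc _ ≤ (2 ^ (s + n) * (max (d y) (dist x y)) ^ (-(s + n))) * |f y| := by
            gcongr
        _ = _ := by
            have : d y ^ s ≠ 0 := by positivity
            field_simp
    · simp [indicator_of_notMem hy]
  set If : Rn n → ℝ≥0∞ := fun x => (∫⁻ t in Set.Ioo (0:ℝ) 1,
      (ENNReal.ofReal (t ^ (-s)) * localApprox (⌊s⌋₊ + 1) 1 f x t) ^ q
        * ENNReal.ofReal t⁻¹) ^ (1 / q) with hIf
  have hin : ∀ x, (∫⁻ t in Set.Ioo (0:ℝ) 1,
      (ENNReal.ofReal (t ^ (-s)) * localApprox (⌊s⌋₊ + 1) 1 (Ω.indicator f) x t) ^ q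
        * ENNReal.ofReal t⁻¹) ^ (1 / q) ≤ If x + K * V x := by
    intro x
    refine (ENNReal.rpow_le_rpow (inner_bound hn hΩo hne hq hs _ hf x _ rfl) (by positivity)).trans ?_
    refine (ENNReal.rpow_add_le_add_rpow _ _ (by positivity) (by rw [div_le_one hq0]; exact hq)).trans ?_
    rw [← ENNReal.rpow_mul, mul_one_div_cancel hq0.ne', ENNReal.rpow_one]
    exact add_le_add le_rfl (hUV x)
  set A := (∫⁻ x, ENNReal.ofReal |f x| ^ p) ^ (1 / p) with hA
  set I := (∫⁻ x, If x ^ p) ^ (1 / p) with hI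
  have htl : tlNorm s p q f = A + I := rfl
  set H := (∫⁻ y in Ω, ENNReal.ofReal (|f y| ^ p / infDist y (frontier Ω) ^ (s * p))) ^ (1/p) with hH
  have h1p : 1 / p ≤ 1 := by rw [div_le_one hp0]; exact hp.le
  have part1 : (∫⁻ x, ENNReal.ofReal |Ω.indicator f x| ^ p) ^ (1 / p) ≤ A := by
    refine ENNReal.rpow_le_rpow (lintegral_mono fun x => ?_) (by positivity)
    refine ENNReal.rpow_le_rpow (ENNReal.ofReal_le_ofReal ?_) hp0.le
    by_cases hx : x ∈ Ω
    · rw [indicator_of_mem hx]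
    · rw [indicator_of_notMem hx]; simp
  have part2 : (∫⁻ x, ((∫⁻ t in Set.Ioo (0:ℝ) 1,
      (ENNReal.ofReal (t ^ (-s)) * localApprox (⌊s⌋₊ + 1) 1 (Ω.indicator f) x t) ^ q
        * ENNReal.ofReal t⁻¹) ^ (1 / q)) ^ p) ^ (1 / p) ≤ D * (I + K * (ENNReal.ofReal C0 * H)) := by
    calc _ ≤ (∫⁻ x, (2:ℝ≥0∞) ^ (p - 1) * (If x ^ p + (K * V x) ^ p)) ^ (1 / p) := by
          refine ENNReal.rpow_le_rpow (lintegral_mono fun x => ?_) (by positivity)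
          refine (ENNReal.rpow_le_rpow (hin x) hp0.le).trans ?_
          exact ENNReal.rpow_add_le_mul_rpow_add_rpow _ _ hp.le
      _ = D * ((∫⁻ x, If x ^ p) + K ^ p * ∫⁻ x, V x ^ p) ^ (1 / p) := by
          rw [lintegral_const_mul' _ _ (ENNReal.rpow_ne_top_of_nonneg (by linarith) (by simp)),
            lintegral_add_right _ ((hVm.const_mul K).pow_const p), ENNReal.mul_rpow_of_nonneg _ _ (by positivity)]
          simp_rw [ENNReal.mul_rpow_of_nonneg _ _ hp0.le]
          rw [lintegral_const_mul _ (hVm.pow_const p)]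
      _ ≤ D * (I + (K ^ p * ∫⁻ x, V x ^ p) ^ (1 / p)) := by
          gcongr
          exact ENNReal.rpow_add_le_add_rpow _ _ (by positivity) h1p
      _ ≤ _ := by
          rw [ENNReal.mul_rpow_of_nonneg _ _ (by positivity : 0 ≤ 1 / p), ← ENNReal.rpow_mul,
            mul_one_div_cancel hp0.ne', ENNReal.rpow_one]
          gcongr
  have hsum : tlNorm s p q (Ω.indicator f) ≤ A + D * (I + K * (ENNReal.ofReal C0 * H)) := add_le_add part1 part2
  rw [htl]
  refine hsum.trans ?_
  calc _ = 1 * A + D * I + D * K * ENNReal.ofReal C0 * H := by ring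
    _ ≤ E * A + E * I + E * H := by
        gcongr
        · rw [hE, add_assoc, add_left_comm]; exact le_self_add
        · rw [hE]; exact le_add_self
    _ = _ := by ring
end
end
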